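/- arXiv:1712.07338 — 2 statements merged into one kernel-verified Lean document; each statement's English description precedes it below -/
import Mathlib

section
/- Let n > 1 be an odd integer, and let a and b be integers satisfying a ≡ 19 (mod 30), b ≡ 6 (mod 15), and gcd(a, b) = 1. Then 3 divides the class number of the quadratic field ℚ(√(3(a^{3n} − b^{2n}))). -/
/-!
Put `A = a ^ n`, `B = b ^ n` and let `L` be generated over `K ∋ √(3 * (A ^ 3 - B ^ 2))` by a root of
`X ^ 3 - 3 * A * X - 2 * B`. The congruences modulo `5` make this cubic irreducible, and its
discriminant is a square in `K`, so `L / K` is cyclic of degree `3`. If the Galois group acted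
trivially on the residue field of a prime, the three roots would coincide there. Modulo primes not
above `3` this forces `A` and `2 * B` to vanish; modulo primes above `3` one compares instead the
squares of the roots divided by `3`, which are integral because `9 ∣ B`. As `A` and `2 * B` are
coprime, `L / K` is unramified.

Hilbert's Theorem 94 then applies. An index computation in the unit group gives a unit of norm `1`
which is not of the form `u / σ u` with `u` a unit, although it is `ε / σ ε` with `ε` an integer by
Hilbert's Theorem 90. The ideal `(ε)` is Galois invariant, hence extended from an ideal of `K`
whose class is nontrivial and is killed by `[L : K]`.
-/

open scoped Pointwise NumberField
open Module Polynomial NumberField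

/-! ### Norms and coboundaries in finitely generated modules over a cyclic group -/

section FinitelyGenerated

theorem index_range_nsmul_prod (T F : Type*) [AddCommGroup T] [AddCommGroup F] [Finite T]
    [Module.Finite ℤ F] [Module.Free ℤ F] {m : ℕ} (hm : m ≠ 0) :
    (nsmulAddMonoidHom (α := T × F) m).range.index =
      m ^ finrank ℤ F * Nat.card (nsmulAddMonoidHom (α := T × F) m).ker := by
  have hprod : nsmulAddMonoidHom (α := T × F) m =
      (nsmulAddMonoidHom m).prodMap (nsmulAddMonoidHom m) := rfl
  have hF : (nsmulAddMonoidHom (α := F) m).ker = ⊥ := (AddMonoidHom.ker_eq_bot_iff _).2 <|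
    AddSubgroup.nsmulAddMonoidHom_injective_of_isTorsionFree hm
  rw [hprod, AddMonoidHom.range_prodMap, AddMonoidHom.ker_prodMap, AddSubgroup.index_prod,
    AddSubgroup.index_range, AddSubgroup.index_range_nsmul, hF, mul_comm]
  simp [Nat.card_congr (AddSubgroup.prodEquiv _ _).toEquiv]

variable {M : Type*} [AddCommGroup M] [Module.Finite ℤ M]

theorem index_range_nsmul_eq_mul_card_ker {m : ℕ} (hm : m ≠ 0) :
    (nsmulAddMonoidHom (α := M) m).range.index =
      m ^ finrank ℤ M * Nat.card (nsmulAddMonoidHom (α := M) m).ker := by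
  obtain ⟨f, hf⟩ := projective_lifting_property _ LinearMap.id
    (Submodule.torsion ℤ M).mkQ_surjective
  let e := (lequivProdOfRightSplitExact (Submodule.injective_subtype _)
    (by rw [Submodule.range_subtype, Submodule.ker_mkQ]) hf).toAddEquiv
  have : Finite (Submodule.torsion ℤ M) :=
    finite_of_fg_torsion _ (Submodule.torsion_isTorsion (R := ℤ) (M := M))
  have hindex := AddSubgroup.index_map_equiv (nsmulAddMonoidHom (α := M) m).range e.symm
  have hker : Nat.card (nsmulAddMonoidHom (α := M) m).ker = Nat.card (nsmulAddMonoidHom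
      (α := (Submodule.torsion ℤ M) × (M ⧸ Submodule.torsion ℤ M)) m).ker :=
    Nat.card_congr (e.symm.toEquiv.subtypeEquiv fun x ↦ by simp [← map_nsmul])
  rw [← hindex, AddEquiv.map_range_nsmulAddMonoidHom, index_range_nsmul_prod _ _ hm, hker,
    finrank_quotient_eq_of_le_torsion le_rfl]

theorem relIndex_map_nsmul_eq_mul_card_inf_ker {m : ℕ} (hm : m ≠ 0) (V : Submodule ℤ M) :
    (V.toAddSubgroup.map (nsmulAddMonoidHom m)).relIndex V.toAddSubgroup =
      m ^ finrank ℤ V * Nat.card ↥(V.toAddSubgroup ⊓ (nsmulAddMonoidHom (α := M) m).ker) := by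
  have hker : Nat.card (nsmulAddMonoidHom (α := V) m).ker =
      Nat.card ↥(V.toAddSubgroup ⊓ (nsmulAddMonoidHom (α := M) m).ker) :=
    Nat.card_congr <| (Equiv.subtypeEquivRight fun x ↦ Subtype.ext_iff).trans
      (Equiv.subtypeSubtypeEquivSubtypeInter (· ∈ V) (m • · = 0))
  rw [AddSubgroup.relIndex, AddSubgroup.addSubgroupOf_map_nsmulAddMonoidHom_eq_range, ← hker]
  exact index_range_nsmul_eq_mul_card_ker (M := V) hm

end FinitelyGenerated

section CyclicAction

variable {M : Type*} [AddCommGroup M]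

theorem relIndex_map_pow_dvd_pow (D : End ℤ M) {V : Submodule ℤ M} (hV : V.map D ≤ V)
    (k : ℕ) : (V.map (D ^ k)).toAddSubgroup.relIndex V.toAddSubgroup ∣
      (V.map D).toAddSubgroup.relIndex V.toAddSubgroup ^ k := by
  have map_pow_succ (k : ℕ) : V.map (D ^ (k + 1)) = (V.map (D ^ k)).map D := by
    rw [pow_succ', End.mul_eq_comp, Submodule.map_comp]
  have map_pow_le (k : ℕ) : V.map (D ^ k) ≤ V := by
    induction k with
    | zero => exact (Submodule.map_id V).le
    | succ k ih => exact map_pow_succ k ▸ (Submodule.map_mono ih).trans hV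
  induction k with
  | zero => simp [End.one_eq_id]
  | succ k ih =>
    have hstep : ((V.map (D ^ k)).map D).toAddSubgroup.relIndex (V.map D).toAddSubgroup ∣
        (V.map (D ^ k)).toAddSubgroup.relIndex V.toAddSubgroup := by
      have hsup : V.toAddSubgroup ⊔ D.toAddMonoidHom.ker =
          V.toAddSubgroup ⊔ ((V.map (D ^ k)).toAddSubgroup ⊔ D.toAddMonoidHom.ker) := by
        rw [← sup_assoc, sup_eq_left.2 (show (V.map (D ^ k)).toAddSubgroup ≤ _ from map_pow_le k)]
      calc _ = ((V.map (D ^ k)).toAddSubgroup ⊔ D.toAddMonoidHom.ker).relIndex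
            (V.toAddSubgroup ⊔ D.toAddMonoidHom.ker) := AddSubgroup.relIndex_map_map _ _ _
        _ = ((V.map (D ^ k)).toAddSubgroup ⊔ D.toAddMonoidHom.ker).relIndex V.toAddSubgroup := by
          rw [hsup, AddSubgroup.relIndex_sup_right]
        _ ∣ _ := AddSubgroup.relIndex_dvd_of_le_left _ le_sup_left
    rw [map_pow_succ, pow_succ, ← AddSubgroup.relIndex_mul_relIndex _ (V.map D).toAddSubgroup _
      (Submodule.map_mono (map_pow_le k)) hV]
    exact mul_dvd_mul_right (hstep.trans ih) _

theorem exists_X_sub_one_pow_eq_geom_sum_add (p : ℕ) [Fact p.Prime] :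
    ∃ g : ℤ[X], (X - 1) ^ (p - 1) = ∑ i ∈ Finset.range p, X ^ i + (p : ℤ[X]) * g := by
  have hcyc := cyclotomic_mul_prime_eq_pow_of_not_dvd (ZMod p) (n := 1) (p := p)
    (Nat.Prime.not_dvd_one Fact.out)
  rw [one_mul, cyclotomic_prime, cyclotomic_one] at hcyc
  have hmem : ((X - 1) ^ (p - 1) - ∑ i ∈ Finset.range p, X ^ i : ℤ[X]) ∈
      RingHom.ker (mapRingHom (Int.castRingHom (ZMod p))) := by
    simp [RingHom.mem_ker, Polynomial.map_sum, hcyc]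
  rw [Polynomial.ker_mapRingHom, ZMod.ker_intCastRingHom, Ideal.map_span, Set.image_singleton,
    Ideal.mem_span_singleton] at hmem
  obtain ⟨g, hg⟩ := hmem
  exact ⟨g, by rw [sub_eq_iff_eq_add'] at hg; simpa using hg⟩

variable {p : ℕ} (s : End ℤ M)

theorem relIndex_map_nsmul_dvd_pow_of_eq_ker_geom_sum [Fact p.Prime] {V : Submodule ℤ M}
    (hV : V = LinearMap.ker (∑ i ∈ Finset.range p, s ^ i)) :
    (V.toAddSubgroup.map (nsmulAddMonoidHom p)).relIndex V.toAddSubgroup ∣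
      (V.map (s - 1)).toAddSubgroup.relIndex V.toAddSubgroup ^ (p - 1) := by
  have aeval_mem (f : ℤ[X]) {v : M} (hv : v ∈ V) : aeval s f v ∈ V := by
    have hcomm : Commute (aeval s f) (∑ i ∈ Finset.range p, s ^ i) := by
      simpa using (Commute.all f (∑ i ∈ Finset.range p, X ^ i)).map (aeval s)
    rw [hV, LinearMap.mem_ker] at hv ⊢
    rw [← End.mul_apply, ← hcomm.eq, End.mul_apply, hv, map_zero]
  have hV' : V.map (s - 1) ≤ V := by
    rintro _ ⟨v, hv, rfl⟩
    have : aeval s (X - 1 : ℤ[X]) = s - 1 := by simp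
    exact this ▸ aeval_mem (X - 1) hv
  obtain ⟨g, hg⟩ := exists_X_sub_one_pow_eq_geom_sum_add p
  have hpow : (s - 1) ^ (p - 1) = ∑ i ∈ Finset.range p, s ^ i + p * aeval s g := by
    simpa using congrArg (aeval s) hg
  have hle : (V.map ((s - 1) ^ (p - 1))).toAddSubgroup ≤
      V.toAddSubgroup.map (nsmulAddMonoidHom p) := by
    rintro _ ⟨v, hv, rfl⟩
    have hNv : (∑ i ∈ Finset.range p, s ^ i) v = 0 := by rwa [hV] at hv
    refine ⟨aeval s g v, aeval_mem g hv, ?_⟩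
    simp only [hpow, LinearMap.add_apply, hNv, zero_add, nsmulAddMonoidHom_apply,
      End.mul_apply, End.natCast_apply]
  exact (AddSubgroup.relIndex_dvd_of_le_left _ hle).trans (relIndex_map_pow_dvd_pow _ hV' _)

theorem relIndex_map_range (f : End ℤ M) (V : Submodule ℤ M) :
    (V.map f).toAddSubgroup.relIndex (LinearMap.range f).toAddSubgroup =
      (V ⊔ LinearMap.ker f).toAddSubgroup.index := by
  have := AddSubgroup.relIndex_map_map f.toAddMonoidHom V.toAddSubgroup ⊤
  rw [top_sup_eq, AddSubgroup.relIndex_top_right, ← AddMonoidHom.range_eq_map] at this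
  rw [Submodule.sup_toAddSubgroup]
  exact this

theorem geom_sum_apply_of_mem_ker_sub_one {w : M} (hw : w ∈ LinearMap.ker (s - 1)) (k : ℕ) :
    (∑ i ∈ Finset.range k, s ^ i) w = k • w := by
  have hsw : s w = w := sub_eq_zero.1 hw
  have hpow (i : ℕ) : (s ^ i) w = w := by
    rw [End.pow_apply]
    exact Function.iterate_fixed hsw i
  simp [LinearMap.sum_apply, hpow]

theorem relIndex_map_sub_one_dvd_of_ker_eq_range {V W : Submodule ℤ M} (hs : s ^ p = 1)
    (hV : V = LinearMap.ker (∑ i ∈ Finset.range p, s ^ i)) (hW : W = LinearMap.ker (s - 1))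
    (hVD : V = LinearMap.range (s - 1)) :
    (V.map (s - 1)).toAddSubgroup.relIndex V.toAddSubgroup ∣
      (W.toAddSubgroup.map (nsmulAddMonoidHom p)).relIndex W.toAddSubgroup := by
  set N : End ℤ M := ∑ i ∈ Finset.range p, s ^ i with hN
  have hWN : (W.map N).toAddSubgroup = W.toAddSubgroup.map (nsmulAddMonoidHom p) := by
    ext x
    exact exists_congr fun w ↦ and_congr_right fun hw ↦ by
      rw [hN, geom_sum_apply_of_mem_ker_sub_one s (hW ▸ hw) p, nsmulAddMonoidHom_apply]
  have hNW : (LinearMap.range N).toAddSubgroup ≤ W.toAddSubgroup := by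
    rintro _ ⟨x, rfl⟩
    have : (s - 1) * N = 0 := by rw [hN, mul_geom_sum, hs, sub_self]
    exact hW ▸ LinearMap.congr_fun this x
  have hTW : (W.map N).toAddSubgroup ≤ W.toAddSubgroup :=
    (Submodule.toAddSubgroup_mono LinearMap.map_le_range).trans hNW
  calc (V.map (s - 1)).toAddSubgroup.relIndex V.toAddSubgroup
      = (V ⊔ W).toAddSubgroup.index := by
        conv_lhs => arg 2; rw [hVD]
        rw [relIndex_map_range, hW]
    _ = (W.map N).toAddSubgroup.relIndex (LinearMap.range N).toAddSubgroup := by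
        rw [relIndex_map_range, ← hV, sup_comm]
    _ = (W.map N).toAddSubgroup.relIndex
          ((LinearMap.range N).toAddSubgroup ⊔ (W.map N).toAddSubgroup) :=
        (AddSubgroup.relIndex_sup_right _ _).symm
    _ ∣ (W.map N).toAddSubgroup.relIndex W.toAddSubgroup :=
        Dvd.intro _ (AddSubgroup.relIndex_mul_relIndex _ _ _ le_sup_right (sup_le hNW hTW))
    _ = _ := by rw [hWN]

theorem mul_pow_pred_lt_pow_mul {p w : ℕ} (hp : 1 < p) (hw : 0 < w) (hwp : w ≤ p) (r : ℕ) :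
    (p ^ r * w) ^ (p - 1) < p ^ ((p - 1) * (r + 1)) * w := by
  have hlt : w ^ (p - 1) < p ^ (p - 1) * w := by
    obtain rfl | hw1 := (Nat.succ_le_of_lt hw).eq_or_lt
    · simpa using Nat.one_lt_pow (Nat.sub_ne_zero_of_lt hp) hp
    · exact (Nat.pow_le_pow_left hwp _).trans_lt (lt_mul_of_one_lt_right (by positivity) hw1)
  calc (p ^ r * w) ^ (p - 1) = p ^ ((p - 1) * r) * w ^ (p - 1) := by rw [mul_pow, ← pow_mul']
    _ < p ^ ((p - 1) * r) * (p ^ (p - 1) * w) := by gcongr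
    _ = p ^ ((p - 1) * (r + 1)) * w := by rw [← mul_assoc, ← pow_add]; rfl

theorem finite_ker_nsmul [Module.Finite ℤ M] {m : ℕ} (hm : m ≠ 0) :
    Finite (nsmulAddMonoidHom (α := M) m).ker := by
  let T := AddSubgroup.toIntSubmodule (nsmulAddMonoidHom (α := M) m).ker
  refine finite_of_fg_torsion T fun x ↦ ⟨⟨m, by simpa using hm⟩, ?_⟩
  exact Subtype.ext ((natCast_zsmul _ _).trans x.2)

theorem pow_finrank_mul_card_dvd_of_ker_geom_sum_eq_range [Module.Finite ℤ M] [Fact p.Prime]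
    {V W : Submodule ℤ M} (hs : s ^ p = 1) (hV : V = LinearMap.ker (∑ i ∈ Finset.range p, s ^ i))
    (hW : W = LinearMap.ker (s - 1)) (hVD : V = LinearMap.range (s - 1)) :
    p ^ finrank ℤ V * Nat.card ↥(V.toAddSubgroup ⊓ (nsmulAddMonoidHom (α := M) p).ker) ∣
      (p ^ finrank ℤ W * Nat.card ↥(W.toAddSubgroup ⊓ (nsmulAddMonoidHom (α := M) p).ker)) ^
        (p - 1) := by
  have hp : p ≠ 0 := (Fact.out : p.Prime).ne_zero
  rw [← relIndex_map_nsmul_eq_mul_card_inf_ker hp, ← relIndex_map_nsmul_eq_mul_card_inf_ker hp]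
  exact (relIndex_map_nsmul_dvd_pow_of_eq_ker_geom_sum s hV).trans
    (pow_dvd_pow_of_dvd (relIndex_map_sub_one_dvd_of_ker_eq_range s hs hV hW hVD) (p - 1))

theorem ker_geom_sum_ne_range_sub_one [Module.Finite ℤ M] [Fact p.Prime] (hs : s ^ p = 1)
    (hrank : finrank ℤ M + 1 = p * (finrank ℤ (LinearMap.ker (s - 1)) + 1))
    (htors : Nat.card (nsmulAddMonoidHom (α := M) p).ker ≤ p) :
    LinearMap.ker (∑ i ∈ Finset.range p, s ^ i) ≠ LinearMap.range (s - 1) := by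
  intro hrange
  have hp : p.Prime := Fact.out
  have hdvd := pow_finrank_mul_card_dvd_of_ker_geom_sum_eq_range s hs rfl rfl hrange
  have hfin := finite_ker_nsmul (M := M) hp.ne_zero
  set V := LinearMap.ker (∑ i ∈ Finset.range p, s ^ i)
  set W := LinearMap.ker (s - 1) with hW
  set T := (nsmulAddMonoidHom (α := M) p).ker
  have hfinV : Finite ↥(V.toAddSubgroup ⊓ T) :=
    Finite.of_injective _ (AddSubgroup.inclusion_injective inf_le_right)
  have hWV : W.toAddSubgroup ⊓ T ≤ V.toAddSubgroup ⊓ T := fun w hw ↦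
    ⟨(geom_sum_apply_of_mem_ker_sub_one s hw.1 p).trans hw.2, hw.2⟩
  have hposW : 0 < Nat.card ↥(W.toAddSubgroup ⊓ T) :=
    have := Finite.of_injective _ (AddSubgroup.inclusion_injective hWV)
    Nat.card_pos
  have hcardW : Nat.card ↥(W.toAddSubgroup ⊓ T) ≤ p :=
    (AddSubgroup.card_le_of_le inf_le_right).trans htors
  have hker : (p - 1) * (finrank ℤ W + 1) ≤ finrank ℤ V := by
    have hdim := Submodule.finrank_quotient_add_finrank W
    rw [hW, (s - 1).quotKerEquivRange.finrank_eq, ← hrange, ← hW] at hdim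
    rw [Nat.sub_mul]
    lia
  refine (mul_pow_pred_lt_pow_mul hp.one_lt hposW hcardW (finrank ℤ W)).not_ge ?_
  calc _ ≤ p ^ finrank ℤ V * Nat.card ↥(V.toAddSubgroup ⊓ T) :=
        Nat.mul_le_mul (Nat.pow_le_pow_right hp.pos hker) (AddSubgroup.card_le_of_le hWV)
    _ ≤ _ := Nat.le_of_dvd (pow_pos (mul_pos (pow_pos hp.pos _) hposW) _) hdvd

theorem exists_geom_sum_apply_eq_zero_notMem_range_sub_one [Module.Finite ℤ M] [Fact p.Prime]
    (hs : s ^ p = 1) (hrank : finrank ℤ M + 1 = p * (finrank ℤ (LinearMap.ker (s - 1)) + 1))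
    (htors : Nat.card (nsmulAddMonoidHom (α := M) p).ker ≤ p) :
    ∃ v, (∑ i ∈ Finset.range p, s ^ i) v = 0 ∧ v ∉ LinearMap.range (s - 1) := by
  by_contra! hle
  refine ker_geom_sum_ne_range_sub_one s hs hrank htors (le_antisymm hle ?_)
  rintro _ ⟨x, rfl⟩
  have hzero : (∑ i ∈ Finset.range p, s ^ i) * (s - 1) = 0 := by rw [geom_sum_mul, hs, sub_self]
  exact LinearMap.congr_fun hzero x

end CyclicAction

theorem exists_ne_zero_mul_smul_eq_of_prod_smul_eq_one {G R : Type*} [Group G] [CommRing R]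
    [IsDomain R] [MulSemiringAction G R] [FaithfulSMul G R] {σ : G} (hσ : IsOfFinOrder σ) {w : R}
    (hw : ∏ i ∈ Finset.range (orderOf σ), σ ^ i • w = 1) : ∃ ε : R, ε ≠ 0 ∧ w * σ • ε = ε := by
  let c (i : ℕ) : R := ∏ j ∈ Finset.range i, σ ^ j • w
  have hc (i : ℕ) : w * σ • c i = c (i + 1) := by
    simp only [c, Finset.smul_prod', ← mul_smul, ← pow_succ', Finset.prod_range_succ', pow_zero,
      one_smul, mul_comm]
  let χ (τ : G) : R →* R := MulSemiringAction.toRingHom G R τ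
  have hχ : Function.Injective χ := fun τ ρ h ↦
    FaithfulSMul.eq_of_smul_eq_smul fun x : R ↦ DFunLike.congr_fun h x
  obtain ⟨z, hz⟩ : ∃ z : R, ∑ i ∈ Finset.range (orderOf σ), c i * σ ^ i • z ≠ 0 := by
    by_contra! hzero
    have hli : LinearIndepOn R (fun i : ℕ ↦ (χ (σ ^ i) : R → R)) (Finset.range (orderOf σ)) := by
      refine ((linearIndependent_monoidHom R R).comp χ hχ).linearIndepOn _ |>.comp_of_image ?_
      exact pow_injOn_Iio_orderOf.mono fun i hi ↦ Finset.mem_range.1 hi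
    have := linearIndepOn_finset_iff.1 hli c (funext fun z ↦ by simpa [χ] using hzero z) 0
      (Finset.mem_range.2 hσ.orderOf_pos)
    simp [c] at this
  refine ⟨_, hz, ?_⟩
  have hterm (i : ℕ) : w * σ • (c i * σ ^ i • z) = c (i + 1) * σ ^ (i + 1) • z := by
    rw [smul_mul', ← mul_assoc, hc, ← mul_smul, ← pow_succ']
  rw [Finset.smul_sum, Finset.mul_sum, Finset.sum_congr rfl fun i _ ↦ hterm i,
    ← add_left_inj (c 0 * σ ^ 0 • z), ← Finset.sum_range_succ' (fun i ↦ c i * σ ^ i • z),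
    Finset.sum_range_succ]
  simp [c, hw, pow_orderOf_eq_one]

/-! ### Invariant ideals in unramified extensions -/

theorem smul_map_algebraMap {A B G : Type*} [CommRing A] [CommRing B] [Algebra A B] [Group G]
    [MulSemiringAction G B] [SMulCommClass G A B] (σ : G) (I : Ideal A) :
    σ • I.map (algebraMap A B) = I.map (algebraMap A B) := by
  rw [Ideal.pointwise_smul_def, Ideal.map_map]
  exact congrArg (I.map ·) (RingHom.ext fun x ↦ smul_algebraMap σ x)

section InvariantIdeals

variable {A B G : Type*} [CommRing A] [IsDomain A] [CommRing B] [IsDedekindDomain B]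
  [Algebra A B] [IsTorsionFree A B] [Algebra.IsIntegral A B] [Group G] [Finite G]
  [MulSemiringAction G B] [IsGaloisGroup G A B]

theorem map_dvd_of_forall_smul_eq_of_ramificationIdx_eq_one {p : Ideal A} [p.IsMaximal]
    (hp : p ≠ ⊥) {P I : Ideal B} [P.IsPrime] [P.LiesOver p]
    (hram : ∀ Q ∈ p.primesOver B, Q.ramificationIdx A = 1)
    (hI : ∀ σ : G, σ • I = I) (hIP : I ≤ P) : p.map (algebraMap A B) ∣ I := by
  have hmap : p.map (algebraMap A B) = ∏ Q ∈ (p.primesOver B).toFinset, Q := by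
    rw [Ideal.map_algebraMap_eq_finsetProd_pow hp]
    exact Finset.prod_congr rfl fun Q hQ ↦ by rw [hram Q (Set.mem_toFinset.1 hQ), pow_one]
  rw [hmap]
  refine Finset.prod_primes_dvd I (fun Q hQ ↦ ?_) fun Q hQ ↦ ?_
  all_goals obtain ⟨_, _⟩ := Set.mem_toFinset.1 hQ
  · exact Ideal.prime_of_isPrime (Ideal.ne_bot_of_liesOver_of_ne_bot hp Q) inferInstance
  · obtain ⟨σ, rfl⟩ := Ideal.exists_smul_eq_of_isGaloisGroup p P Q G
    rw [Ideal.dvd_iff_le, ← hI σ]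
    exact Ideal.pointwise_smul_le_pointwise_smul_iff.2 hIP

theorem exists_map_algebraMap_eq_of_forall_smul_eq [Ring.DimensionLEOne A]
    (hram : ∀ P : Ideal B, P.IsPrime → P ≠ ⊥ → P.ramificationIdx A = 1) {I : Ideal B}
    (hI0 : I ≠ ⊥) (hI : ∀ σ : G, σ • I = I) : ∃ J : Ideal A, J.map (algebraMap A B) = I := by
  induction I using IsNoetherian.induction with
  | hgt I ih =>
    by_cases htop : I = ⊤
    · exact ⟨⊤, by rw [htop, Ideal.map_top]⟩
    obtain ⟨P, hPm, hIP⟩ := Ideal.exists_le_maximal I htop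
    have hp0 : P.under A ≠ ⊥ := fun h ↦
      hI0 (le_bot_iff.1 (Ideal.eq_bot_of_comap_eq_bot h ▸ hIP))
    have : (P.under A).IsMaximal := Ideal.IsPrime.isMaximal inferInstance hp0
    obtain ⟨I', rfl⟩ := map_dvd_of_forall_smul_eq_of_ramificationIdx_eq_one (p := P.under A)
      hp0 (fun Q ⟨_, _⟩ ↦ hram Q ‹_› (Ideal.ne_bot_of_liesOver_of_ne_bot hp0 Q)) hI hIP
    obtain ⟨hmap0, hI'0⟩ := mul_ne_zero_iff.1 hI0
    have hlt : (P.under A).map (algebraMap A B) * I' < I' := by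
      refine lt_of_le_of_ne Ideal.mul_le_right fun h ↦ hPm.ne_top ?_
      rw [← top_le_iff, ← Ideal.one_eq_top, ← (mul_eq_right₀ hI'0).1 h]
      exact Ideal.map_comap_le
    have hI' (σ : G) : σ • I' = I' := mul_left_cancel₀ hmap0 <| by
      simpa only [smul_mul', smul_map_algebraMap] using hI σ
    obtain ⟨J, rfl⟩ := ih I' hlt hI'0 hI'
    exact ⟨P.under A * J, Ideal.map_mul _ _ _⟩

end InvariantIdeals

theorem ramificationIdx_eq_one_of_inertia_eq_bot {A B G : Type*} [CommRing A] [IsDomain A]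
    [CommRing B] [IsDomain B] [Algebra A B] [Flat A B] [Module.Finite A B] [Group G] [Finite G]
    [MulSemiringAction G B] [IsGaloisGroup G A B] {P : Ideal B} [P.IsPrime]
    [PerfectField (P.under A).ResidueField] (hP : P.inertia G = ⊥) : P.ramificationIdx A = 1 := by
  rw [← Ideal.ramificationIdxIn_eq_ramificationIdx (P.under A) P G,
    ← Ideal.card_inertia_eq_ramificationIdxIn (G := G) (P.under A) P, hP, Subgroup.card_bot]

/-! ### Hilbert's Theorem 94 -/

theorem smul_eq_of_mem_zpowers {G α : Type*} [Group G] [MulAction G α] {σ τ : G} {x : α}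
    (hσ : σ • x = x) (hτ : τ ∈ Subgroup.zpowers σ) : τ • x = x :=
  (Subgroup.zpowers_le.2 (MulAction.mem_stabilizer_iff.2 hσ)) hτ

theorem card_ker_nsmul_units_le (R : Type*) [CommRing R] [IsDomain R] (m : ℕ) [NeZero m] :
    Nat.card (nsmulAddMonoidHom (α := Additive Rˣ) m).ker ≤ m :=
  card_rootsOfUnity R m

section UnitGroup

open Representation

attribute [local instance] Units.mulDistribMulActionRight

section FixedUnits

variable (A : Type*) {B G : Type*} [CommRing A] [CommRing B] [Algebra A B]
  [FaithfulSMul A B] [Group G] [MulSemiringAction G B] [Algebra.IsInvariant A B G]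

theorem exists_units_map_algebraMap_eq_of_smul_eq {σ : G} (hσ : ∀ τ, τ ∈ Subgroup.zpowers σ)
    {u : Bˣ} (hu : σ • u = u) : ∃ a : Aˣ, Units.map (algebraMap A B) a = u := by
  have hfix (v : Bˣ) (hv : σ • v = v) : ∃ a : A, algebraMap A B a = v :=
    Algebra.IsInvariant.isInvariant (G := G) _ fun τ ↦
      congrArg Units.val (smul_eq_of_mem_zpowers hv (hσ τ))
  obtain ⟨a, ha⟩ := hfix u hu
  obtain ⟨b, hb⟩ := hfix u⁻¹ (by rw [smul_inv', hu])
  have hab : a * b = 1 := FaithfulSMul.algebraMap_injective A B (by simp [ha, hb])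
  exact ⟨Units.mkOfMulEqOne a b hab, Units.ext ha⟩

theorem finrank_ker_ofMulDistribMulAction_sub_one [SMulCommClass G A B] {σ : G}
    (hσ : ∀ τ, τ ∈ Subgroup.zpowers σ) :
    finrank ℤ (LinearMap.ker (ofMulDistribMulAction G Bˣ σ - 1)) = finrank ℤ (Additive Aˣ) := by
  let i : Additive Aˣ →ₗ[ℤ] Additive Bˣ :=
    (MonoidHom.toAdditive (Units.map (algebraMap A B : A →* B))).toIntLinearMap
  have hi : Function.Injective i := Units.map_injective (FaithfulSMul.algebraMap_injective A B)
  have hrange : LinearMap.range i = LinearMap.ker (ofMulDistribMulAction G Bˣ σ - 1) := by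
    ext x
    rw [LinearMap.mem_ker, LinearMap.sub_apply, sub_eq_zero]
    refine ⟨?_, exists_units_map_algebraMap_eq_of_smul_eq A hσ (u := x.toMul)⟩
    rintro ⟨a, rfl⟩
    exact Units.ext (smul_algebraMap σ _)
  rw [← hrange, LinearMap.finrank_range_of_inj hi]

end FixedUnits

variable {K L : Type*} [Field K] [NumberField K] [Field L] [NumberField L] [Algebra K L]

theorem finrank_units_add_one_of_isUnramifiedAtInfinitePlaces [IsGalois K L]
    [IsUnramifiedAtInfinitePlaces K L] :
    finrank ℤ (Additive (𝓞 L)ˣ) + 1 = finrank K L * (finrank ℤ (Additive (𝓞 K)ˣ) + 1) := by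
  have hK : 0 < Fintype.card (InfinitePlace K) := Fintype.card_pos
  have hL : 0 < Fintype.card (InfinitePlace L) := Fintype.card_pos
  rw [Units.finrank_eq, Units.finrank_eq, Units.rank, Units.rank, Nat.sub_add_cancel hK,
    Nat.sub_add_cancel hL, IsUnramifiedAtInfinitePlaces.card_infinitePlace K L, mul_comm]

theorem exists_unit_prod_smul_eq_one_forall_ne [IsGalois K L] [IsUnramifiedAtInfinitePlaces K L]
    {p : ℕ} [Fact p.Prime] (hp : finrank K L = p) {σ : Gal(L/K)}
    (hσ : ∀ τ, τ ∈ Subgroup.zpowers σ) :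
    ∃ w : (𝓞 L)ˣ, ∏ i ∈ Finset.range p, σ ^ i • w = 1 ∧ ∀ u : (𝓞 L)ˣ, w * σ • u ≠ u := by
  set s := ofMulDistribMulAction Gal(L/K) (𝓞 L)ˣ σ with hs
  have hsp : s ^ p = 1 := by
    rw [hs, ← map_pow, ← hp, ← IsGalois.card_aut_eq_finrank, pow_card_eq_one', map_one]
  have hrank : finrank ℤ (Additive (𝓞 L)ˣ) + 1 = p * (finrank ℤ (LinearMap.ker (s - 1)) + 1) := by
    rw [finrank_units_add_one_of_isUnramifiedAtInfinitePlaces (K := K), hp,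
      finrank_ker_ofMulDistribMulAction_sub_one (𝓞 K) hσ]
  have : NeZero p := ⟨(Fact.out : p.Prime).ne_zero⟩
  obtain ⟨w, hw, hw'⟩ := exists_geom_sum_apply_eq_zero_notMem_range_sub_one s hsp hrank
    (card_ker_nsmul_units_le (𝓞 L) p)
  refine ⟨w.toMul, ?_, fun u hu ↦ hw' ⟨-Additive.ofMul u, ?_⟩⟩
  · simpa [hs, LinearMap.sum_apply, ← map_pow] using congrArg Additive.toMul hw
  · have hu : w + s (Additive.ofMul u) = Additive.ofMul u := congrArg Additive.ofMul hu
    rw [map_neg, LinearMap.sub_apply, End.one_apply, neg_sub]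
    exact sub_eq_of_eq_add hu.symm

end UnitGroup

theorem smul_span_singleton {G R : Type*} [Group G] [CommRing R] [MulSemiringAction G R]
    (σ : G) (x : R) : σ • Ideal.span {x} = Ideal.span {σ • x} := by
  rw [Ideal.pointwise_smul_def, Ideal.map_span, Set.image_singleton]
  rfl

theorem classGroup_mk0_pow_finrank_eq_one_of_map_eq_span {A B : Type*} [CommRing A]
    [IsDedekindDomain A] [CommRing B] [IsDedekindDomain B] [Algebra A B] [Module.Finite A B]
    [IsTorsionFree A B] {J : nonZeroDivisors (Ideal A)} {ε : B}
    (hJ : (J : Ideal A).map (algebraMap A B) = Ideal.span {ε}) :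
    ClassGroup.mk0 J ^ finrank A B = 1 := by
  rw [← map_pow, ClassGroup.mk0_eq_one_iff (SetLike.coe_mem _), SubmonoidClass.coe_pow,
    ← Ideal.relNorm_algebraMap B, hJ, Ideal.relNorm_singleton]
  exact ⟨_, rfl⟩

theorem exists_unit_mul_smul_eq_of_map_eq_span {A B G : Type*} [CommRing A] [CommRing B]
    [IsDomain B] [Algebra A B] [Group G] [MulSemiringAction G B] [SMulCommClass G A B]
    {J : Ideal A} (hJ : J.IsPrincipal) {ε : B} (hJε : J.map (algebraMap A B) = Ideal.span {ε})
    (hε0 : ε ≠ 0) {w : B} {σ : G} (hε : w * σ • ε = ε) : ∃ u : Bˣ, w * σ • (u : B) = u := by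
  obtain ⟨β, rfl⟩ := hJ
  rw [Ideal.submodule_span_eq, Ideal.map_span, Set.image_singleton,
    Ideal.span_singleton_eq_span_singleton] at hJε
  obtain ⟨u, rfl⟩ := hJε
  refine ⟨u, mul_left_cancel₀ (left_ne_zero_of_mul hε0) ?_⟩
  rwa [smul_mul', smul_algebraMap, mul_left_comm] at hε

theorem prime_dvd_classNumber_of_unramified {K L : Type*} [Field K] [NumberField K] [Field L]
    [NumberField L] [Algebra K L] [IsGalois K L] [IsUnramifiedAtInfinitePlaces K L] {p : ℕ}
    [Fact p.Prime] (hp : finrank K L = p)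
    (hram : ∀ P : Ideal (𝓞 L), P.IsPrime → P ≠ ⊥ → P.ramificationIdx (𝓞 K) = 1) :
    p ∣ classNumber K := by
  have hcard : Nat.card Gal(L/K) = p := (IsGalois.card_aut_eq_finrank K L).trans hp
  have : IsCyclic Gal(L/K) := isCyclic_of_prime_card hcard
  obtain ⟨σ, hσ⟩ := IsCyclic.exists_generator (α := Gal(L/K))
  have hord : orderOf σ = p := (orderOf_eq_card_of_forall_mem_zpowers hσ).trans hcard
  obtain ⟨w, hw, hwu⟩ := exists_unit_prod_smul_eq_one_forall_ne hp hσ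
  have := (inferInstance : IsGaloisGroup Gal(L/K) (𝓞 K) (𝓞 L)).faithful
  obtain ⟨ε, hε0, hε⟩ := exists_ne_zero_mul_smul_eq_of_prod_smul_eq_one (isOfFinOrder_of_finite σ)
    (w := (w : 𝓞 L)) (by simpa [hord] using congrArg Units.val hw)
  have hspan : σ • Ideal.span {ε} = Ideal.span {ε} := by
    rw [smul_span_singleton, Ideal.span_singleton_eq_span_singleton]
    exact ⟨w, by rw [mul_comm, hε]⟩
  have hspan0 : Ideal.span {ε} ≠ ⊥ := by simpa using hε0
  obtain ⟨J, hJ⟩ := exists_map_algebraMap_eq_of_forall_smul_eq (G := Gal(L/K)) hram hspan0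
    fun τ ↦ smul_eq_of_mem_zpowers hspan (hσ τ)
  have hJ0 : J ≠ 0 := by
    rintro rfl
    exact hspan0 (hJ.symm.trans Ideal.map_bot)
  let c := ClassGroup.mk0 ⟨J, mem_nonZeroDivisors_of_ne_zero hJ0⟩
  have hcp : c ^ p = 1 := by
    rw [← hp, IsFractionRing.finrank_eq (𝓞 K) K (𝓞 L) L]
    exact classGroup_mk0_pow_finrank_eq_one_of_map_eq_span hJ
  have hc1 : c ≠ 1 := fun hc ↦ by
    obtain ⟨u, hu⟩ := exists_unit_mul_smul_eq_of_map_eq_span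
      ((ClassGroup.mk0_eq_one_iff _).1 hc) hJ hε0 hε
    exact hwu u (Units.ext hu)
  exact orderOf_eq_prime hcp hc1 ▸ orderOf_dvd_card

/-! ### The cubic `X ^ 3 - 3 * A * X - 2 * B` -/

theorem irreducible_map_of_not_natDegree_dvd_finrank {F E : Type*} [Field F] [Field E]
    [Algebra F E] {f : F[X]} (hf : Irreducible f) (hf2 : 2 ≤ f.natDegree) (hf3 : f.natDegree ≤ 3)
    (hE : ¬ f.natDegree ∣ finrank F E) : Irreducible (f.map (algebraMap F E)) := by
  rw [irreducible_iff_roots_eq_zero_of_degree_le_three (by rwa [natDegree_map])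
    (by rwa [natDegree_map]), Multiset.eq_zero_iff_forall_notMem]
  refine fun x hx ↦ hE ?_
  have hx : aeval x f = 0 := (mem_aroots.1 hx).2
  have hint : IsIntegral F x := isAlgebraic_iff_isIntegral.1 ⟨f, hf.ne_zero, hx⟩
  have hdeg : (minpoly F x).natDegree = f.natDegree := by
    rw [← minpoly.eq_of_irreducible hf hx,
      natDegree_mul_C (inv_ne_zero (leadingCoeff_ne_zero.2 hf.ne_zero))]
  exact hdeg ▸ minpoly.degree_dvd hint

theorem isGalois_adjoinRoot_of_splits {F : Type*} [Field F] {f : F[X]} [Fact (Irreducible f)]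
    (hsep : f.Separable) (hf : (f.map (algebraMap F (AdjoinRoot f))).Splits) :
    IsGalois F (AdjoinRoot f) := by
  have : IsSplittingField F (AdjoinRoot f) f := by
    refine ⟨hf, top_le_iff.1 (AdjoinRoot.adjoinRoot_eq_top.ge.trans (Algebra.adjoin_mono ?_))⟩
    rw [Set.singleton_subset_iff, mem_rootSet]
    exact ⟨hsep.ne_zero, by rw [AdjoinRoot.aeval_eq, AdjoinRoot.mk_self]⟩
  exact IsGalois.of_separable_splitting_field hsep

theorem toPoly_splits_of_discr_eq_sq {F : Type*} [Field F] [NeZero (2 : F)] {P : Cubic F}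
    (ha : P.a ≠ 0) {θ δ : F} (hθ : P.toPoly.eval θ = 0) (hδ : P.discr = δ ^ 2) :
    P.toPoly.Splits := by
  obtain ⟨a, b, c, d⟩ := P
  simp only [Cubic.toPoly, Cubic.discr, eval_add, eval_mul, eval_C, eval_pow, eval_X]
    at ha hθ hδ ⊢
  obtain rfl : d = -((a * θ ^ 2 + b * θ + c) * θ) := by linear_combination hθ
  have hfactor : C a * X ^ 3 + C b * X ^ 2 + C c * X + C (-((a * θ ^ 2 + b * θ + c) * θ)) =
      (X - C θ) * (C a * X ^ 2 + C (a * θ + b) * X + C (a * θ ^ 2 + b * θ + c)) := by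
    simp only [map_add, map_mul, map_neg, map_pow]
    ring
  obtain ⟨r, hr⟩ : ∃ r, a * (r * r) + (a * θ + b) * r + (a * θ ^ 2 + b * θ + c) = 0 := by
    by_cases hθ' : 3 * a * θ ^ 2 + 2 * b * θ + c = 0
    · exact ⟨θ, by linear_combination hθ'⟩
    · refine exists_quadratic_eq_zero ha ⟨δ / (3 * a * θ ^ 2 + 2 * b * θ + c), ?_⟩
      rw [← sq, div_pow, ← hδ, eq_div_iff (pow_ne_zero 2 hθ'), discrim]
      ring
  rw [hfactor]
  refine (Splits.X_sub_C θ).mul (.of_natDegree_eq_two (natDegree_quadratic ha) (x := r) ?_)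
  simpa [sq] using hr

theorem add_eq_zero_and_sq_add_mul_add_sq_eq {R : Type*} [CommRing R] [IsDomain R]
    {A B x y z : R} (hx : x ^ 3 = 3 * A * x + 2 * B) (hy : y ^ 3 = 3 * A * y + 2 * B)
    (hz : z ^ 3 = 3 * A * z + 2 * B) (hxy : x ≠ y) (hyz : y ≠ z) (hxz : x ≠ z) :
    x + y + z = 0 ∧ x ^ 2 + x * y + y ^ 2 = 3 * A := by
  have hq {u v : R} (hu : u ^ 3 = 3 * A * u + 2 * B) (hv : v ^ 3 = 3 * A * v + 2 * B)
      (huv : u ≠ v) : u ^ 2 + u * v + v ^ 2 = 3 * A :=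
    mul_left_cancel₀ (sub_ne_zero.2 huv) (by linear_combination hu - hv)
  refine ⟨mul_left_cancel₀ (sub_ne_zero.2 hyz) ?_, hq hx hy hxy⟩
  linear_combination hq hx hy hxy - hq hx hz hxz

theorem three_dvd_sq_of_nine_dvd {R : Type*} [CommRing R] [IsDomain R] [IsIntegrallyClosed R]
    (h3 : (3 : R) ≠ 0) {A B t : R} (ht : t ^ 3 = 3 * A * t + 2 * B) (hB : 9 ∣ B) : 3 ∣ t ^ 2 := by
  obtain ⟨k, rfl⟩ := hB
  have hinj := FaithfulSMul.algebraMap_injective R (FractionRing R)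
  have h3' : (3 : FractionRing R) ≠ 0 := by
    simpa only [map_ofNat] using (map_ne_zero_iff _ hinj).2 h3
  have hint : IsIntegral R (algebraMap R (FractionRing R) t ^ 2 / 3) := by
    refine ⟨Cubic.toPoly ⟨1, -2 * A, A ^ 2, -12 * k ^ 2⟩, Cubic.monic_of_a_eq_one', ?_⟩
    have hsq : t ^ 2 * (t ^ 2 - 3 * A) ^ 2 = 324 * k ^ 2 := by
      linear_combination (t ^ 3 - 3 * A * t + 18 * k) * ht
    replace hsq := congrArg (algebraMap R (FractionRing R)) hsq
    simp only [map_mul, map_sub, map_pow, map_ofNat] at hsq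
    simp only [Cubic.toPoly, eval₂_add, eval₂_mul, eval₂_C, eval₂_pow, eval₂_X]
    simp only [map_mul, map_pow, map_neg, map_one, map_ofNat]
    field_simp
    linear_combination hsq
  obtain ⟨g, hg⟩ := IsIntegrallyClosed.isIntegral_iff.1 hint
  exact ⟨g, hinj (by rw [map_mul, hg, map_pow, map_ofNat, mul_div_cancel₀ _ h3'])⟩

section CubicRoots

variable {R : Type*} [CommRing R] [IsDomain R] {φ : R →+* R} {A B t : R}

theorem add_map_add_map_map_eq_zero_and (hA : φ A = A) (hB : φ B = B)
    (ht : t ^ 3 = 3 * A * t + 2 * B) (hφ : φ (φ (φ t)) = t) (hφt : φ t ≠ t) :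
    t + φ t + φ (φ t) = 0 ∧ t ^ 2 + t * φ t + φ t ^ 2 = 3 * A := by
  have hroot {x : R} (hx : x ^ 3 = 3 * A * x + 2 * B) : φ x ^ 3 = 3 * A * φ x + 2 * B := by
    simpa only [map_add, map_mul, map_pow, map_ofNat, hA, hB] using congrArg φ hx
  have hne : t ≠ φ (φ t) := fun h ↦ hφt ((congrArg φ h).trans hφ)
  have hne' : φ t ≠ φ (φ t) := fun h ↦ hne (hφ.symm.trans (congrArg φ h).symm)
  exact add_eq_zero_and_sq_add_mul_add_sq_eq ht (hroot ht) (hroot (hroot ht)) hφt.symm hne' hne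

theorem add_map_add_map_map_eq_two_mul (h3 : (3 : R) ≠ 0) {g : R} (hg : t ^ 2 = 3 * g)
    (hsum : t + φ t + φ (φ t) = 0) (hquad : t ^ 2 + t * φ t + φ t ^ 2 = 3 * A) :
    g + φ g + φ (φ g) = 2 * A := by
  have hg' : φ t ^ 2 = 3 * φ g := by
    simpa only [map_mul, map_pow, map_ofNat] using congrArg φ hg
  have hg'' : φ (φ t) ^ 2 = 3 * φ (φ g) := by
    simpa only [map_mul, map_pow, map_ofNat] using congrArg φ hg'
  refine mul_left_cancel₀ h3 ?_
  linear_combination (-t - φ t + φ (φ t)) * hsum + 2 * hquad - hg - hg' - hg''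

theorem exists_map_apply_ne_of_cubic_root [IsIntegrallyClosed R] (h3 : (3 : R) ≠ 0)
    (hA : φ A = A) (hB : φ B = B) (hAB : IsCoprime A (2 * B)) (h9 : 9 ∣ B)
    (ht : t ^ 3 = 3 * A * t + 2 * B) (hφ : φ (φ (φ t)) = t) (hφt : φ t ≠ t)
    {k : Type*} [CommRing k] [IsDomain k] (π : R →+* k) : ∃ x, π (φ x) ≠ π x := by
  by_contra! hπ
  obtain ⟨hsum, hquad⟩ := add_map_add_map_map_eq_zero_and hA hB ht hφ hφt
  obtain ⟨g, hg⟩ := three_dvd_sq_of_nine_dvd h3 ht h9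
  have hgsum := congrArg π (add_map_add_map_map_eq_two_mul h3 hg hsum hquad)
  replace hsum := congrArg π hsum
  replace hquad := congrArg π hquad
  replace ht := congrArg π ht
  simp only [map_add, map_mul, map_pow, map_ofNat, hπ, map_zero] at hsum hquad hgsum ht
  obtain ⟨hA0, hB0⟩ : π A = 0 ∧ 2 * π B = 0 := by
    by_cases h3k : (3 : k) = 0
    · obtain ⟨B', rfl⟩ := h9
      have h2A : 2 * π A = 0 := by linear_combination -hgsum + π g * h3k
      refine ⟨by linear_combination π A * h3k - h2A, ?_⟩
      rw [map_mul, map_ofNat]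
      linear_combination 6 * π B' * h3k
    · have ht0 : π t = 0 := mul_left_cancel₀ h3k (by linear_combination hsum)
      exact ⟨mul_left_cancel₀ h3k (by linear_combination -hquad + 3 * π t * ht0),
        by linear_combination -ht + (π t ^ 2 - 3 * π A) * ht0⟩
  have hcop := hAB.map π
  rw [map_mul, map_ofNat, hA0, hB0] at hcop
  exact not_isCoprime_zero_zero hcop

end CubicRoots

/-- The cubic `X ^ 3 - 3 * A * X - 2 * B`. The factors `3` and `2` make its discriminant
`6 ^ 2 * (3 * (A ^ 3 - B ^ 2))`. -/
def depressedCubic {R : Type*} [CommRing R] (A B : R) : Cubic R :=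
  ⟨1, 0, -3 * A, -2 * B⟩

section DepressedCubic

variable {R : Type*} [CommRing R] (A B : R)

theorem monic_toPoly_depressedCubic : (depressedCubic A B).toPoly.Monic :=
  Cubic.monic_of_a_eq_one'

theorem natDegree_toPoly_depressedCubic [Nontrivial R] :
    (depressedCubic A B).toPoly.natDegree = 3 :=
  Cubic.natDegree_of_a_ne_zero' one_ne_zero

theorem discr_depressedCubic : (depressedCubic A B).discr = 6 ^ 2 * (3 * (A ^ 3 - B ^ 2)) := by
  simp only [depressedCubic, Cubic.discr]
  ring

theorem eval_toPoly_depressedCubic_eq_zero_iff {x : R} :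
    (depressedCubic A B).toPoly.eval x = 0 ↔ x ^ 3 = 3 * A * x + 2 * B := by
  rw [← sub_eq_zero (a := x ^ 3)]
  simp only [depressedCubic, Cubic.toPoly, eval_add, eval_mul, eval_C, eval_pow, eval_X]
  ring_nf

theorem map_toPoly_depressedCubic {S : Type*} [CommRing S] (f : R →+* S) :
    (depressedCubic A B).toPoly.map f = (depressedCubic (f A) (f B)).toPoly := by
  simp only [← Cubic.map_toPoly, depressedCubic, Cubic.map, map_one, map_zero, map_mul, map_neg,
    map_ofNat]

end DepressedCubic

theorem irreducible_toPoly_depressedCubic_zmod_five :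
    Irreducible (depressedCubic (-1) 1 : Cubic (ZMod 5)).toPoly := by
  have hroot : ∀ x : ZMod 5, x ^ 3 ≠ 3 * (-1) * x + 2 * 1 := by decide
  have : Fact (Nat.Prime 5) := ⟨Nat.prime_five⟩
  have hdeg := natDegree_toPoly_depressedCubic (-1 : ZMod 5) 1
  rw [irreducible_iff_roots_eq_zero_of_degree_le_three (by lia) hdeg.le,
    Multiset.eq_zero_iff_forall_notMem]
  intro x hx
  exact hroot x ((eval_toPoly_depressedCubic_eq_zero_iff _ _).1 (isRoot_of_mem_roots hx))

theorem irreducible_toPoly_depressedCubic_rat {A B : ℤ} (hA : A ≡ -1 [ZMOD 5])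
    (hB : B ≡ 1 [ZMOD 5]) : Irreducible (depressedCubic (A : ℚ) (B : ℚ)).toPoly := by
  have : Fact (Nat.Prime 5) := ⟨Nat.prime_five⟩
  have hmonic := monic_toPoly_depressedCubic A B
  have hmod5 : Irreducible ((depressedCubic A B).toPoly.map (Int.castRingHom (ZMod 5))) := by
    have hA' := (ZMod.intCast_eq_intCast_iff _ _ 5).2 hA
    have hB' := (ZMod.intCast_eq_intCast_iff _ _ 5).2 hB
    rw [map_toPoly_depressedCubic, eq_intCast, eq_intCast, hA', hB', Int.cast_neg, Int.cast_one]
    exact irreducible_toPoly_depressedCubic_zmod_five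
  have hint := hmonic.irreducible_of_irreducible_map _ _ hmod5
  rwa [hmonic.irreducible_iff_irreducible_map_fraction_map (K := ℚ),
    map_toPoly_depressedCubic] at hint

theorem isGalois_adjoinRoot_toPoly_of_discr_eq_sq {F : Type*} [Field F] [CharZero F] {P : Cubic F}
    (ha : P.a ≠ 0) [hP : Fact (Irreducible P.toPoly)] {δ : F} (hδ : P.discr = δ ^ 2) :
    IsGalois F (AdjoinRoot P.toPoly) := by
  refine isGalois_adjoinRoot_of_splits hP.out.separable ?_
  have := charZero_of_injective_algebraMap (algebraMap F (AdjoinRoot P.toPoly)).injective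
  rw [← Cubic.map_toPoly]
  refine toPoly_splits_of_discr_eq_sq (θ := AdjoinRoot.root P.toPoly)
    (δ := algebraMap F (AdjoinRoot P.toPoly) δ) (by simpa [Cubic.map] using ha) ?_ ?_
  · rw [Cubic.map_toPoly, eval_map]
    exact AdjoinRoot.eval₂_root _
  · rw [← map_pow, ← hδ]
    simp only [Cubic.discr, Cubic.map, map_add, map_sub, map_mul, map_pow, map_ofNat]

theorem inertia_eq_bot_of_cubic_root {R G : Type*} [CommRing R] [IsDomain R] [IsIntegrallyClosed R]
    [Group G] [MulSemiringAction G R] (h3 : (3 : R) ≠ 0) (hG : ∀ σ : G, σ ^ 3 = 1) {A B : ℤ}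
    (hAB : IsCoprime A (2 * B)) (h9 : 9 ∣ B) {t : R} (ht : t ^ 3 = 3 * A * t + 2 * B)
    (hfree : ∀ σ : G, σ • t = t → σ = 1) (P : Ideal R) [P.IsPrime] : P.inertia G = ⊥ := by
  refine (Subgroup.eq_bot_iff_forall _).2 fun σ hσ ↦ by_contra fun hσ1 ↦ ?_
  obtain ⟨x, hx⟩ := exists_map_apply_ne_of_cubic_root (φ := MulSemiringAction.toRingHom G R σ) h3
    (map_intCast _ A) (map_intCast _ B) (by simpa using hAB.map (Int.castRingHom R))
    (by simpa using map_dvd (Int.castRingHom R) h9) ht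
    (by simp [smul_smul, ← sq, ← pow_succ', hG]) (fun h ↦ hσ1 (hfree σ h)) (Ideal.Quotient.mk P)
  exact hx (Ideal.Quotient.eq.2 (hσ x))

theorem ramificationIdx_eq_one_of_cubic_root {K L : Type*} [Field K] [NumberField K] [Field L]
    [NumberField L] [Algebra K L] [IsGalois K L] (hKL : finrank K L = 3) {A B : ℤ}
    (hAB : IsCoprime A (2 * B)) (h9 : 9 ∣ B) {t : 𝓞 L} (ht : t ^ 3 = 3 * A * t + 2 * B)
    (hfree : ∀ σ : Gal(L/K), σ • t = t → σ = 1) (P : Ideal (𝓞 L)) [P.IsPrime] (hP : P ≠ ⊥) :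
    P.ramificationIdx (𝓞 K) = 1 := by
  have hG (σ : Gal(L/K)) : σ ^ 3 = 1 := by
    rw [← hKL, ← IsGalois.card_aut_eq_finrank, pow_card_eq_one']
  have hunder : P.under (𝓞 K) ≠ ⊥ := fun h ↦ hP (Ideal.eq_bot_of_comap_eq_bot h)
  have : (P.under (𝓞 K)).IsMaximal := Ideal.IsPrime.isMaximal inferInstance hunder
  exact ramificationIdx_eq_one_of_inertia_eq_bot (G := Gal(L/K))
    (inertia_eq_bot_of_cubic_root (by norm_num) hG hAB h9 ht hfree P)

theorem three_dvd_classNumber_of_irreducible {K : Type*} [Field K] [NumberField K] {A B : ℤ}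
    (hAB : IsCoprime A (2 * B)) (h9 : 9 ∣ B)
    (hirr : Irreducible (depressedCubic (A : K) (B : K)).toPoly)
    {α : K} (hα : α ^ 2 = 3 * ((A : K) ^ 3 - (B : K) ^ 2)) : 3 ∣ classNumber K := by
  set f := (depressedCubic (A : K) (B : K)).toPoly
  have : Fact (Irreducible f) := ⟨hirr⟩
  have : Module.Finite K (AdjoinRoot f) := (monic_toPoly_depressedCubic _ _).finite_adjoinRoot
  have : NumberField (AdjoinRoot f) := NumberField.of_module_finite K (AdjoinRoot f)
  have : IsGalois K (AdjoinRoot f) := isGalois_adjoinRoot_toPoly_of_discr_eq_sq one_ne_zero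
    (δ := 6 * α) (by rw [discr_depressedCubic, mul_pow, hα])
  have hdeg : finrank K (AdjoinRoot f) = 3 :=
    finrank_quotient_span_eq_natDegree.trans (natDegree_toPoly_depressedCubic _ _)
  have : IsUnramifiedAtInfinitePlaces K (AdjoinRoot f) :=
    IsUnramifiedAtInfinitePlaces_of_odd_finrank (hdeg ▸ by decide)
  have hroot : AdjoinRoot.root f ^ 3 = 3 * A * AdjoinRoot.root f + 2 * B := by
    rw [← eval_toPoly_depressedCubic_eq_zero_iff]
    have := AdjoinRoot.eval₂_root f
    rwa [← eval_map, map_toPoly_depressedCubic, map_intCast, map_intCast] at this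
  have hint : IsIntegral ℤ (AdjoinRoot.root f) := by
    refine ⟨(depressedCubic A B).toPoly, monic_toPoly_depressedCubic _ _, ?_⟩
    rw [← eval_map, map_toPoly_depressedCubic]
    exact (eval_toPoly_depressedCubic_eq_zero_iff _ _).2 hroot
  obtain ⟨t, ht⟩ : ∃ t : 𝓞 (AdjoinRoot f), (t : AdjoinRoot f) = AdjoinRoot.root f :=
    ⟨⟨_, hint⟩, rfl⟩
  have := Fact.mk Nat.prime_three
  refine prime_dvd_classNumber_of_unramified hdeg fun P _ ↦
    ramificationIdx_eq_one_of_cubic_root hdeg hAB h9 (t := t) ?_ ?_ P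
  · refine RingOfIntegers.ext ?_
    simpa only [map_add, map_mul, map_pow, map_ofNat, map_intCast, ht] using hroot
  · intro σ hσ
    refine AlgEquiv.coe_toAlgHom_injective (AdjoinRoot.algHom_ext ?_)
    rw [← ht]
    exact congrArg (algebraMap _ (AdjoinRoot f)) hσ

theorem three_dvd_classNumber_of_modEq_five {K : Type*} [Field K] [NumberField K]
    (hK : ¬ 3 ∣ finrank ℚ K) {A B : ℤ} (hAB : IsCoprime A (2 * B)) (h9 : 9 ∣ B)
    (hA : A ≡ -1 [ZMOD 5]) (hB : B ≡ 1 [ZMOD 5])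
    {α : K} (hα : α ^ 2 = 3 * ((A : K) ^ 3 - (B : K) ^ 2)) : 3 ∣ classNumber K := by
  have hdeg := natDegree_toPoly_depressedCubic (A : ℚ) (B : ℚ)
  have hirr := irreducible_map_of_not_natDegree_dvd_finrank (E := K)
    (irreducible_toPoly_depressedCubic_rat hA hB) (by lia) hdeg.le (by rwa [hdeg])
  rw [map_toPoly_depressedCubic, map_intCast, map_intCast] at hirr
  exact three_dvd_classNumber_of_irreducible hAB h9 hirr hα

theorem class_number_div_three_of_sqrt_three_mul_pow_sub_pow_general
    {n : ℕ} (hn : 1 < n) (hnodd : Odd n) {a b : ℤ} (ha : a ≡ 9 [ZMOD 10]) (hb : b ≡ 6 [ZMOD 15])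
    (hgcd : Int.gcd a b = 1) (K : Type*) [Field K] [NumberField K] (hdeg : ¬ 3 ∣ finrank ℚ K)
    (hsqrt : ∃ α : K, α ^ 2 = 3 * ((a : K) ^ (3 * n) - (b : K) ^ (2 * n))) :
    3 ∣ classNumber K := by
  obtain ⟨α, hα⟩ := hsqrt
  have ha_odd : Odd a := Int.odd_iff.2 (by unfold Int.ModEq at ha; lia)
  have hb3 : 3 ∣ b := by unfold Int.ModEq at hb; lia
  have ha5 : a ≡ -1 [ZMOD 5] := (ha.of_dvd (by decide : (5 : ℤ) ∣ 10)).trans (by decide)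
  have hb5 : b ≡ 1 [ZMOD 5] := (hb.of_dvd (by decide : (5 : ℤ) ∣ 15)).trans (by decide)
  have hcop : IsCoprime (a ^ n) (2 * b ^ n) :=
    (Int.isCoprime_two_right.2 ha_odd).pow_left.mul_right (Int.isCoprime_iff_gcd_eq_one.2 hgcd).pow
  have h9 : 9 ∣ b ^ n := (pow_dvd_pow_of_dvd hb3 2).trans (pow_dvd_pow b hn)
  have han : a ^ n ≡ -1 [ZMOD 5] := by simpa only [hnodd.neg_one_pow] using ha5.pow n
  have hbn : b ^ n ≡ 1 [ZMOD 5] := by simpa only [one_pow] using hb5.pow n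
  refine three_dvd_classNumber_of_modEq_five hdeg hcop h9 han hbn (α := α) ?_
  rw [hα, Int.cast_pow, Int.cast_pow, ← pow_mul', ← pow_mul']

/-- Let `n > 1` be an odd integer, and `a`, `b` integers with `a ≡ 19 (mod 30)`,
`b ≡ 6 (mod 15)` and `gcd(a, b) = 1`.  Then `3` divides the class number of
`ℚ(√(3 * (a ^ (3 * n) - b ^ (2 * n))))`. -/
theorem class_number_div_three_of_sqrt_three_mul_pow_sub_pow
    (n : ℕ) (hn : 1 < n) (hnodd : Odd n)
    (a b : ℤ) (ha : a ≡ 19 [ZMOD 30]) (hb : b ≡ 6 [ZMOD 15]) (hgcd : Int.gcd a b = 1)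
    (K : Type*) [Field K] [NumberField K] (hdeg : Module.finrank ℚ K = 2)
    (hsqrt : ∃ α : K, α ^ 2 = 3 * ((a : K) ^ (3 * n) - (b : K) ^ (2 * n))) :
    3 ∣ NumberField.classNumber K :=
  class_number_div_three_of_sqrt_three_mul_pow_sub_pow_general hn hnodd
    ((ha.of_dvd (by decide : (10 : ℤ) ∣ 30)).trans (by decide)) hb hgcd K
    (by rw [hdeg]; decide) hsqrt
end

section
/- Let n > 1 be an integer, and let a and b be odd integers satisfying gcd(a, b) = 1, a ≡ 1 (mod 3), and b ≡ 0 (mod 3). Then 3 divides the class number of the quadratic field ℚ(√(3(4a^{3n} − b^{2n}))). -/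
/-!
Put `A = a ^ n`, `B = b ^ n` and `m = 4 A³ - B²`, so that `K = ℚ(√(3 m))`. The cubic
`X³ - 3 A X + B` is irreducible modulo `2`, hence over `K`, and its discriminant `27 m` is a square
in `K`; so a root `θ` generates a cyclic cubic extension `L / K`. No prime of `L` has inertia in
`L / K`: if `σ ≠ 1` acts trivially modulo `Q`, then `3` lies in `Q` because `θ` is a root of the
cubic above, while `A m`, which is prime to `3`, lies in `Q` because `θ √(3 m) / 3` is a root of
the cubic `X³ - A m X + (B / 9) m √(3 m)`, which is integral because `9 ∣ B`.

Suppose `3` does not divide the class number of `K`. If `σ` generates `Gal(L / K)`, a unit `e` of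
relative norm `1` is `α / σ α` by Hilbert 90. The ideal `(α)` is Galois stable, so it comes from an
ideal of `K`, which is principal because its cube is. Hence `e = u / σ u` for a unit `u`. As `K`
contains no primitive cube root of unity, this forces the unit rank of `L` to be at most `3` times
that of `K`. But `L / K`, having odd degree, is unramified at infinity, so
`rank L = 3 rank K + 2`.
-/

open NumberField NumberField.Units

section Index

/-- The subgroup `n M` of an abelian group `M`. -/
abbrev multiples (M : Type*) [AddCommGroup M] (n : ℕ) : AddSubgroup M :=
  (nsmulAddMonoidHom n).range

variable {M F : Type*} [AddCommGroup M] [AddCommGroup F]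

theorem index_sup_iterate_map_dvd (f : M →+ M) {N : AddSubgroup M} (hN : N.map f ≤ N) (n : ℕ) :
    (N ⊔ (AddSubgroup.map f)^[n] ⊤).index ∣ (N ⊔ f.range).index ^ n := by
  induction n with
  | zero => simp
  | succ n ih =>
    set H := N ⊔ (AddSubgroup.map f)^[n] ⊤ with hH
    have hsucc : N ⊔ (AddSubgroup.map f)^[n + 1] ⊤ = N ⊔ H.map f := by
      rw [Function.iterate_succ_apply', hH, AddSubgroup.map_sup, ← sup_assoc, sup_eq_left.2 hN]
    have hle : N ⊔ H.map f ≤ N ⊔ f.range := sup_le_sup_left (AddSubgroup.map_le_range f H) N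
    have hrel : (N ⊔ H.map f).relIndex (N ⊔ f.range) ∣ H.index := calc
      (N ⊔ H.map f).relIndex (N ⊔ f.range) = (N ⊔ H.map f).relIndex f.range := by
        rw [← AddSubgroup.relIndex_sup_right f.range, ← sup_assoc, sup_comm f.range,
          sup_assoc, sup_eq_left.2 (AddSubgroup.map_le_range f H)]
      _ ∣ (H.map f).relIndex f.range := AddSubgroup.relIndex_dvd_of_le_left _ le_sup_right
      _ = (H ⊔ f.ker).index := by
        rw [AddMonoidHom.range_eq_map, AddSubgroup.relIndex_map_map, top_sup_eq,
          AddSubgroup.relIndex_top_right]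
      _ ∣ H.index := AddSubgroup.index_dvd_of_le le_sup_left
    rw [hsucc, ← AddSubgroup.relIndex_mul_index hle, pow_succ]
    exact mul_dvd_mul_right (hrel.trans ih) _

theorem sub_one_pow_prime_apply_mem_multiples {p : ℕ} (hp : p.Prime) {σ : AddMonoid.End M}
    (hσ : σ ^ p = 1) (x : M) : ((σ - 1) ^ p) x ∈ multiples M p := by
  obtain ⟨r, hr⟩ := (Commute.one_right (σ - 1)).exists_add_pow_prime_eq hp
  rw [sub_add_cancel, hσ, one_pow, mul_one] at hr
  have hpow : (σ - 1) ^ p = p * -((σ - 1) * r) := by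
    rw [mul_neg, ← mul_assoc, eq_neg_iff_add_eq_zero]
    simpa only [add_right_comm _ (1 : AddMonoid.End M), right_eq_add] using hr
  exact ⟨-((σ - 1) * r) x, by rw [hpow]; rfl⟩

theorem index_multiples_dvd_of_pow_eq_one {p : ℕ} (hp : p.Prime) {σ : AddMonoid.End M}
    (hσ : σ ^ p = 1) :
    (multiples M p).index ∣ (multiples M p ⊔ AddMonoidHom.range (σ - 1)).index ^ p := by
  have hstable : (multiples M p).map (σ - 1) ≤ multiples M p := by
    rintro _ ⟨_, ⟨x, rfl⟩, rfl⟩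
    exact ⟨(σ - 1) x, (map_nsmul (σ - 1) p x).symm⟩
  have hiterate (n : ℕ) : ∀ y ∈ (AddSubgroup.map (σ - 1))^[n] ⊤, ∃ x, ((σ - 1) ^ n) x = y := by
    induction n with
    | zero => exact fun y _ ↦ ⟨y, rfl⟩
    | succ n ih =>
      rw [Function.iterate_succ_apply']
      rintro _ ⟨y, hy, rfl⟩
      obtain ⟨x, rfl⟩ := ih y hy
      exact ⟨x, by rw [pow_succ']; rfl⟩
  have hle : (AddSubgroup.map (σ - 1))^[p] ⊤ ≤ multiples M p := by
    intro y hy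
    obtain ⟨x, rfl⟩ := hiterate p y hy
    exact sub_one_pow_prime_apply_mem_multiples hp hσ x
  have hdvd := index_sup_iterate_map_dvd (σ - 1) hstable p
  rwa [sup_eq_left.2 hle] at hdvd

theorem relIndex_map_nsmul {p : ℕ} (hp : Function.Injective (p • · : F → F))
    {H : AddSubgroup F} (hH : H.index ≠ 0) :
    (H.map (nsmulAddMonoidHom p)).relIndex H = (multiples F p).index := by
  have hle : H.map (nsmulAddMonoidHom p) ≤ H := by
    rintro _ ⟨x, hx, rfl⟩
    exact H.nsmul_mem hx p
  refine Nat.eq_of_mul_eq_mul_right (Nat.pos_of_ne_zero hH) ?_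
  rw [AddSubgroup.relIndex_mul_index hle, AddSubgroup.index_map_of_injective H hp, mul_comm]

theorem map_multiples (f : M →+ F) (n : ℕ) :
    (multiples M n).map f = f.range.map (nsmulAddMonoidHom n) := by
  rw [AddMonoidHom.map_range, AddMonoidHom.map_range]
  exact congrArg AddMonoidHom.range (AddMonoidHom.ext fun x ↦ map_nsmul f n x)

/- On `M / p M` the endomorphism `σ - 1` is nilpotent of exponent at most `p`, and its cokernel is a
quotient of `ν(M) / p ν(M)`. -/
theorem index_multiples_dvd_of_ker_le {p : ℕ} (hp : p.Prime) {σ : AddMonoid.End M}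
    (hσ : σ ^ p = 1) {ν : M →+ F} (hker : ν.ker ≤ AddMonoidHom.range (σ - 1))
    (hν : ν.range.index ≠ 0) (hinj : Function.Injective (p • · : F → F)) :
    (multiples M p).index ∣ (multiples F p).index ^ p := by
  have hindex : (multiples M p ⊔ ν.ker).index = (multiples F p).index := by
    rw [← relIndex_map_nsmul hinj hν, ← map_multiples, AddMonoidHom.range_eq_map ν,
      AddSubgroup.relIndex_map_map, top_sup_eq, AddSubgroup.relIndex_top_right]
  refine (index_multiples_dvd_of_pow_eq_one hp hσ).trans (pow_dvd_pow_of_dvd ?_ p)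
  rw [← hindex]
  exact AddSubgroup.index_dvd_of_le (sup_le_sup_left hker _)

theorem index_multiples_eq_pow_finrank [Module.Free ℤ M] [Module.Finite ℤ M] (n : ℕ)
    [NeZero n] : (multiples M n).index = n ^ Module.finrank ℤ M := by
  have hrange : multiples M n = (LinearMap.range (LinearMap.lsmul ℤ M n)).toAddSubgroup := by
    ext x
    simp
  rw [hrange, ← ModN.natCard_eq M n]
  rfl

theorem index_map_multiples_of_surjective [Module.Free ℤ F] [Module.Finite ℤ F] {f : M →+ F}
    (hf : Function.Surjective f) (n : ℕ) [NeZero n] :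
    ((multiples M n).map f).index = n ^ Module.finrank ℤ F := by
  rw [map_multiples, AddMonoidHom.range_eq_top.2 hf, ← AddMonoidHom.range_eq_map,
    index_multiples_eq_pow_finrank]

end Index

section Units

theorem pow_prime_injective_units {K : Type*} [Field K] {p : ℕ} (hp : p.Prime)
    (hζ : ∀ ζ : K, ¬ IsPrimitiveRoot ζ p) :
    Function.Injective (powMonoidHom p : (𝓞 K)ˣ →* (𝓞 K)ˣ) := by
  refine (injective_iff_map_eq_one _).2 fun u hu ↦ by_contra fun hne ↦ ?_
  have hprim : IsPrimitiveRoot u p :=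
    orderOf_eq_prime hu hne (hp := ⟨hp⟩) ▸ IsPrimitiveRoot.orderOf u
  exact hζ _ ((IsPrimitiveRoot.coe_units_iff.2 hprim).map_of_injective
    (FaithfulSMul.algebraMap_injective (𝓞 K) K))

variable (K : Type*) [Field K]

/-- The projection from the unit group of `𝓞 K` to its quotient by torsion, written additively. -/
def unitsModTorsion : Additive (𝓞 K)ˣ →+ Additive ((𝓞 K)ˣ ⧸ torsion K) :=
  (QuotientGroup.mk' (torsion K)).toAdditive

theorem unitsModTorsion_surjective : Function.Surjective (unitsModTorsion K) :=
  QuotientGroup.mk'_surjective (torsion K)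

variable [NumberField K] (p : ℕ)

theorem index_map_unitsModTorsion [NeZero p] :
    (AddSubgroup.map (N := Additive ((𝓞 K)ˣ ⧸ torsion K)) (unitsModTorsion K)
      (multiples (Additive (𝓞 K)ˣ) p)).index = p ^ rank K := by
  rw [← finrank_modTorsion]
  exact index_map_multiples_of_surjective (F := Additive ((𝓞 K)ˣ ⧸ torsion K))
    (unitsModTorsion_surjective K) p

theorem pow_rank_dvd_index_multiples_units [NeZero p] :
    p ^ rank K ∣ (multiples (Additive (𝓞 K)ˣ) p).index := by
  rw [← index_map_unitsModTorsion]
  exact AddSubgroup.index_map_dvd _ (unitsModTorsion_surjective K)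

variable {K p}

theorem index_multiples_units (hp : p.Prime) (hζ : ∀ ζ : K, ¬ IsPrimitiveRoot ζ p) :
    (multiples (Additive (𝓞 K)ˣ) p).index = p ^ rank K := by
  have : NeZero p := ⟨hp.ne_zero⟩
  rw [← index_map_unitsModTorsion]
  refine (AddSubgroup.index_map_eq _ (unitsModTorsion_surjective K) fun u hu ↦ ?_).symm
  have hinj : Function.Injective fun v : torsion K ↦ v ^ p := fun v w h ↦
    Subtype.ext (pow_prime_injective_units hp hζ (congrArg Subtype.val h))
  have hu' : u.toMul ∈ torsion K := (QuotientGroup.eq_one_iff _).1 hu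
  obtain ⟨v, hv⟩ := Finite.injective_iff_surjective.1 hinj ⟨u.toMul, hu'⟩
  exact ⟨.ofMul v, congrArg Subtype.val hv⟩

end Units

section HilbertNinety

/- Hilbert 90; `groupCohomology.exists_div_of_norm_eq_one` covers only fields in `Type`. -/
theorem exists_mul_apply_eq_of_prod_pow_eq_one {K L : Type*} [CommSemiring K] [Field L]
    [Algebra K L] {σ : L ≃ₐ[K] L} (hσ : IsOfFinOrder σ) {e : L}
    (he : ∏ i ∈ Finset.range (orderOf σ), (σ ^ i) e = 1) : ∃ β ≠ 0, e * σ β = β := by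
  set n := orderOf σ with hn
  let c (i : ℕ) : L := ∏ j ∈ Finset.range i, (σ ^ j) e
  have hc (i : ℕ) : e * σ (c i) = c (i + 1) := by
    simp only [c, map_prod, Finset.prod_range_succ', pow_zero, AlgEquiv.one_apply, pow_succ',
      AlgEquiv.mul_apply, mul_comm e]
  obtain ⟨x, hx⟩ : ∃ x, ∑ i ∈ Finset.range n, c i * (σ ^ i) x ≠ 0 := by
    by_contra! hzero
    let φ (i : Fin n) : L →* L := (σ ^ (i : ℕ) : L ≃ₐ[K] L)
    have hφ : Function.Injective φ := fun i j hij ↦ Fin.ext <|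
      pow_injOn_Iio_orderOf i.2 j.2 (AlgEquiv.ext fun x ↦ DFunLike.congr_fun hij x)
    have hind := Fintype.linearIndependent_iff.1 ((linearIndependent_monoidHom L L).comp φ hφ)
      (fun i ↦ c i) (funext fun x ↦ by
        simpa [Finset.sum_range, φ] using hzero x)
    simpa [c] using hind ⟨0, hσ.orderOf_pos⟩
  refine ⟨_, hx, ?_⟩
  have hshift (i : ℕ) : e * σ (c i * (σ ^ i) x) = c (i + 1) * (σ ^ (i + 1)) x := by
    rw [map_mul, ← mul_assoc, hc, pow_succ', AlgEquiv.mul_apply]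
  have hcyclic : c n * (σ ^ n) x = c 0 * (σ ^ 0) x := by
    rw [show c n = 1 from he, hn, pow_orderOf_eq_one, show c 0 = 1 from rfl, pow_zero]
  rw [map_sum, Finset.mul_sum, Finset.sum_congr rfl fun i _ ↦ hshift i]
  refine add_right_cancel (b := c 0 * (σ ^ 0) x) ?_
  rw [← Finset.sum_range_succ' fun i ↦ c i * (σ ^ i) x, Finset.sum_range_succ, hcyclic]

theorem norm_eq_prod_pow_of_zpowers_eq_top {K L : Type*} [Field K] [Field L] [Algebra K L]
    [FiniteDimensional K L] [IsGalois K L] {σ : Gal(L/K)} (hσ : ∀ τ, τ ∈ Subgroup.zpowers σ)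
    (x : L) :
    algebraMap K L (Algebra.norm K x) = ∏ i ∈ Finset.range (orderOf σ), (σ ^ i) x := by
  classical
  rw [Algebra.norm_eq_prod_automorphisms, ← IsCyclic.image_range_orderOf hσ,
    Finset.prod_image (by simpa [Set.InjOn] using pow_injOn_Iio_orderOf (x := σ))]

theorem exists_mul_smul_eq_of_norm_eq_one {K L : Type*} [Field K] [Field L] [Algebra K L]
    [NumberField L] [FiniteDimensional K L] [IsGalois K L] {σ : Gal(L/K)}
    (hσ : ∀ τ, τ ∈ Subgroup.zpowers σ)
    {e : 𝓞 L} (he : Algebra.norm K (e : L) = 1) : ∃ α : 𝓞 L, α ≠ 0 ∧ e * σ • α = α := by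
  obtain ⟨β, hβ, heβ⟩ := exists_mul_apply_eq_of_prod_pow_eq_one (isOfFinOrder_of_finite σ)
    (by rw [← norm_eq_prod_pow_of_zpowers_eq_top hσ, he, map_one])
  obtain ⟨d, hd, hdβ⟩ :=
    ((IsFractionRing.isAlgebraic_iff ℤ ℚ L).2 (.of_finite ℚ β)).exists_integral_multiple
  refine ⟨⟨d • β, hdβ⟩, fun h ↦ smul_ne_zero hd hβ (congrArg RingOfIntegers.val h), ?_⟩
  ext
  change (e : L) * σ (d • β) = d • β
  rw [map_zsmul, mul_smul_comm, heβ]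

end HilbertNinety

section Descent

variable {S R G : Type*} [CommRing R] [Group G] [MulSemiringAction G R]

theorem span_range_smul_sub_eq_top {σ : G} (hσ : ∀ Q : Ideal R, Q.IsMaximal → σ ∉ Q.inertia G) :
    Ideal.span (Set.range fun y : R ↦ σ • y - y) = ⊤ := by
  by_contra hne
  obtain ⟨Q, hQ, hle⟩ := Ideal.exists_le_maximal _ hne
  exact hσ Q hQ fun y ↦ hle (Ideal.subset_span ⟨y, rfl⟩)

variable (G R) in
/-- The ring homomorphism sending `y` to the family `(σ • y)` of its conjugates. -/
def conjugates : R →+* (G → R) := RingHom.pi fun σ ↦ MulSemiringAction.toRingHom G R σ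

@[simp]
theorem conjugates_apply (y : R) (σ : G) : conjugates R G y σ = σ • y := rfl

variable (G R) in
theorem adjoin_range_conjugates_eq_span :
    (Algebra.adjoin R (Set.range (conjugates R G))).toSubmodule =
      Submodule.span R (Set.range (conjugates R G)) := by
  rw [Algebra.adjoin_eq_span]
  exact congrArg (fun N : Submonoid (G → R) ↦ Submodule.span R (N : Set (G → R)))
    (Submonoid.closure_eq (MonoidHom.mrange (conjugates R G : R →* (G → R))))

theorem exists_mem_adjoin_conjugates_separating {σ : G}
    (hσ : ∀ Q : Ideal R, Q.IsMaximal → σ ∉ Q.inertia G) :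
    ∃ c ∈ Algebra.adjoin R (Set.range (conjugates R G)), c 1 = 1 ∧ c σ = 0 := by
  suffices hspan : ∀ x ∈ Ideal.span (Set.range fun y : R ↦ σ • y - y),
      ∃ c ∈ Algebra.adjoin R (Set.range (conjugates R G)), c 1 = x ∧ c σ = 0 from
    hspan 1 (span_range_smul_sub_eq_top hσ ▸ Submodule.mem_top)
  intro x hx
  induction hx using Submodule.span_induction with
  | mem x hx =>
    obtain ⟨y, rfl⟩ := hx
    refine ⟨algebraMap R (G → R) (σ • y) - conjugates R G y, sub_mem (algebraMap_mem _ _)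
      (Algebra.subset_adjoin ⟨y, rfl⟩), by simp, by simp⟩
  | zero => exact ⟨0, zero_mem _, rfl, rfl⟩
  | add x y _ _ hx hy =>
    obtain ⟨c, hc, hc1, hcσ⟩ := hx
    obtain ⟨d, hd, hd1, hdσ⟩ := hy
    exact ⟨c + d, add_mem hc hd, by simp [hc1, hd1], by simp [hcσ, hdσ]⟩
  | smul r x _ hx =>
    obtain ⟨c, hc, hc1, hcσ⟩ := hx
    exact ⟨r • c, Subalgebra.smul_mem _ hc r, by simp [hc1], by simp [hcσ]⟩

theorem single_one_mem_span_conjugates [Finite G] [DecidableEq G]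
    (hin : ∀ Q : Ideal R, Q.IsMaximal → Q.inertia G = ⊥) :
    Pi.single 1 1 ∈ Submodule.span R (Set.range (conjugates R G)) := by
  have := Fintype.ofFinite G
  choose! c hc hc1 hcσ using fun (σ : G) (hσ : σ ≠ 1) ↦
    exists_mem_adjoin_conjugates_separating (R := R) (σ := σ) fun Q hQ h ↦
      hσ (by simpa [hin Q hQ] using h)
  have hprod : ∏ σ ∈ {σ : G | σ ≠ 1}, c σ = Pi.single 1 1 := by
    ext τ
    rw [Finset.prod_apply]
    by_cases hτ : τ = 1
    · subst hτ
      simpa using Finset.prod_eq_one fun σ hσ ↦ hc1 σ (by simpa using hσ)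
    · rw [Pi.single_eq_of_ne hτ]
      exact Finset.prod_eq_zero (by simpa using hτ) (hcσ τ hτ)
  rw [← adjoin_range_conjugates_eq_span, ← hprod]
  exact Subalgebra.prod_mem _ fun σ hσ ↦ hc σ (by simpa using hσ)

variable [CommRing S] [Algebra S R] [Algebra.IsInvariant S R G]

/- The conjugates of `z ∈ I` enter only through the traces of its multiples, which lie in `S`; as
`G` acts without inertia, these traces recover `z` itself. -/
theorem map_comap_eq_self_of_inertia_eq_bot [Finite G]
    (hin : ∀ Q : Ideal R, Q.IsMaximal → Q.inertia G = ⊥) {I : Ideal R}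
    (hI : ∀ (σ : G), ∀ z ∈ I, σ • z ∈ I) :
    (I.comap (algebraMap S R)).map (algebraMap S R) = I := by
  classical
  have := Fintype.ofFinite G
  set J := (I.comap (algebraMap S R)).map (algebraMap S R)
  have htrace (w : R) (hw : w ∈ I) : ∑ σ : G, σ • w ∈ J := by
    obtain ⟨t, ht⟩ := Algebra.IsInvariant.isInvariant (A := S) (G := G) (∑ σ : G, σ • w)
      fun τ ↦ by
        simpa only [Finset.smul_sum, smul_smul, Equiv.coe_mulLeft] using
          Equiv.sum_comp (Equiv.mulLeft τ) (· • w)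
    rw [← ht]
    refine Ideal.mem_map_of_mem _ (Ideal.mem_comap.2 (ht ▸ sum_mem fun σ _ ↦ hI σ w hw))
  have hspan (c : G → R) (hc : c ∈ Submodule.span R (Set.range (conjugates R G))) (z : R)
      (hz : z ∈ I) : ∑ σ : G, c σ * σ • z ∈ J := by
    induction hc using Submodule.span_induction with
    | mem c hc =>
      obtain ⟨y, rfl⟩ := hc
      simpa only [conjugates_apply, smul_mul'] using htrace (y * z) (I.mul_mem_left y hz)
    | zero => simp
    | add c d _ _ hc hd => simpa [add_mul, Finset.sum_add_distrib] using add_mem hc hd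
    | smul r c _ hc => simpa [mul_assoc, Finset.mul_sum] using J.mul_mem_left r hc
  refine le_antisymm Ideal.map_comap_le fun z hz ↦ ?_
  simpa [Pi.single_apply] using hspan _ (single_one_mem_span_conjugates hin) z hz

end Descent

section HilbertNinetyFour

open Pointwise

theorem isPrincipal_of_isPrincipal_pow {R : Type*} [CommRing R] [IsDedekindDomain R] {n : ℕ}
    (hn : (Nat.card (ClassGroup R)).Coprime n) {I : Ideal R} (hI : I ≠ ⊥)
    (h : (I ^ n).IsPrincipal) : I.IsPrincipal := by
  have hI' : I ∈ nonZeroDivisors (Ideal R) := mem_nonZeroDivisors_of_ne_zero hI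
  have hpow : ClassGroup.mk0 ⟨I, hI'⟩ ^ n = 1 := by
    rw [← map_pow, ClassGroup.mk0_eq_one_iff]
    exact h
  rw [← ClassGroup.mk0_eq_one_iff hI', ← orderOf_eq_one_iff]
  exact Nat.eq_one_of_dvd_coprimes hn (orderOf_dvd_natCard _) (orderOf_dvd_of_pow_eq_one hpow)

theorem smul_mem_span_singleton_of_mul_smul_eq {R G : Type*} [CommRing R] [Group G]
    [MulSemiringAction G R] {σ : G} (hσ : ∀ τ, τ ∈ Subgroup.zpowers σ) {e : Rˣ} {α : R}
    (hα : e * σ • α = α) (τ : G) {z : R} (hz : z ∈ Ideal.span {α}) : τ • z ∈ Ideal.span {α} := by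
  have hassoc : Associated (σ • α) α := ⟨e, by rw [mul_comm, hα]⟩
  have hstab : σ ∈ MulAction.stabilizer G (Ideal.span {α}) := by
    rw [MulAction.mem_stabilizer_iff, Ideal.pointwise_smul_def, Ideal.map_span,
      Set.image_singleton]
    exact le_antisymm (Ideal.span_singleton_le_span_singleton.2 hassoc.symm.dvd)
      (Ideal.span_singleton_le_span_singleton.2 hassoc.dvd)
  have hτ : τ • Ideal.span {α} = Ideal.span {α} := (Subgroup.zpowers_le.2 hstab) (hσ τ)
  rw [← hτ]
  exact Ideal.smul_mem_pointwise_smul τ z _ hz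

/-- The action of a group on the units of a ring, written additively so that `σ - 1` makes sense. -/
def unitsAction (G R : Type*) [CommRing R] [Group G] [MulSemiringAction G R] :
    G →* AddMonoid.End (Additive Rˣ) where
  toFun σ := (Units.map (MulSemiringAction.toRingHom G R σ : R →* R)).toAdditive
  map_one' := AddMonoidHom.ext fun u ↦ Units.ext (one_smul G (u.toMul : R))
  map_mul' σ τ := AddMonoidHom.ext fun u ↦ Units.ext (mul_smul σ τ (u.toMul : R))

variable {K L : Type*} [Field K] [Field L] [Algebra K L]

variable (K L) in
/-- The relative norm on unit groups, written additively. -/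
noncomputable def unitsNorm : Additive (𝓞 L)ˣ →+ Additive (𝓞 K)ˣ :=
  (Units.map (RingOfIntegers.norm K (L := L))).toAdditive

theorem multiples_finrank_le_range_unitsNorm :
    multiples (Additive (𝓞 K)ˣ) (Module.finrank K L) ≤ (unitsNorm K L).range := by
  rintro _ ⟨v, rfl⟩
  refine ⟨.ofMul (Units.map (algebraMap (𝓞 K) (𝓞 L) : 𝓞 K →* 𝓞 L) v.toMul), Units.ext ?_⟩
  exact RingOfIntegers.norm_algebraMap K (v.toMul : 𝓞 K)

variable [NumberField K] [NumberField L]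

theorem isPrincipal_of_isPrincipal_map (hcop : (classNumber K).Coprime (Module.finrank K L))
    {I : Ideal (𝓞 K)} (hI : I ≠ ⊥) (h : (I.map (algebraMap (𝓞 K) (𝓞 L))).IsPrincipal) :
    I.IsPrincipal := by
  obtain ⟨α, hα⟩ := h
  have hnorm := Ideal.relNorm_algebraMap (R := 𝓞 K) (𝓞 L) I
  rw [hα, Ideal.submodule_span_eq, Ideal.relNorm_singleton,
    ← IsFractionRing.finrank_eq (𝓞 K) K (𝓞 L) L] at hnorm
  rw [classNumber, ← Nat.card_eq_fintype_card] at hcop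
  exact isPrincipal_of_isPrincipal_pow hcop hI (hnorm ▸ ⟨_, rfl⟩)

variable [IsGalois K L]

variable (K L) in
theorem rank_add_one_eq_of_odd_finrank (hodd : Odd (Module.finrank K L)) :
    rank L + 1 = (rank K + 1) * Module.finrank K L := by
  have := IsUnramifiedAtInfinitePlaces_of_odd_finrank hodd
  rw [rank, rank, Nat.sub_add_cancel Fintype.card_pos, Nat.sub_add_cancel Fintype.card_pos,
    IsUnramifiedAtInfinitePlaces.card_infinitePlace K L]

theorem exists_unit_mul_smul_eq_of_norm_eq_one
    (hcop : (classNumber K).Coprime (Module.finrank K L))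
    (hin : ∀ Q : Ideal (𝓞 L), Q.IsMaximal → Q.inertia Gal(L/K) = ⊥)
    {σ : Gal(L/K)} (hσ : ∀ τ, τ ∈ Subgroup.zpowers σ) {e : (𝓞 L)ˣ}
    (he : Algebra.norm K (e : L) = 1) : ∃ u : (𝓞 L)ˣ, (e : 𝓞 L) * σ • (u : 𝓞 L) = u := by
  have : FiniteDimensional K L := Module.Finite.of_restrictScalars_finite ℚ K L
  obtain ⟨α, hα, heα⟩ := exists_mul_smul_eq_of_norm_eq_one hσ he
  have hmap := map_comap_eq_self_of_inertia_eq_bot (S := 𝓞 K) hin fun τ z hz ↦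
    smul_mem_span_singleton_of_mul_smul_eq hσ heα τ hz
  set I := (Ideal.span {α}).comap (algebraMap (𝓞 K) (𝓞 L))
  have hI : I ≠ ⊥ := by
    intro h
    rw [h, Ideal.map_bot] at hmap
    exact hα (Ideal.span_singleton_eq_bot.1 hmap.symm)
  obtain ⟨a, ha⟩ := isPrincipal_of_isPrincipal_map hcop hI (hmap ▸ ⟨α, rfl⟩)
  rw [ha, Ideal.submodule_span_eq, Ideal.map_span, Set.image_singleton,
    Ideal.span_singleton_eq_span_singleton] at hmap
  obtain ⟨u, rfl⟩ := hmap
  refine ⟨u, mul_left_cancel₀ (left_ne_zero_of_mul hα) ?_⟩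
  rwa [smul_mul', smul_algebraMap, mul_left_comm] at heα

theorem ker_unitsNorm_le_range_unitsAction_sub_one
    (hcop : (classNumber K).Coprime (Module.finrank K L))
    (hin : ∀ Q : Ideal (𝓞 L), Q.IsMaximal → Q.inertia Gal(L/K) = ⊥)
    {σ : Gal(L/K)} (hσ : ∀ τ, τ ∈ Subgroup.zpowers σ) :
    (unitsNorm K L).ker ≤ AddMonoidHom.range (unitsAction Gal(L/K) (𝓞 L) σ - 1) := by
  intro e he
  have hnorm : Algebra.norm K (e.toMul : L) = 1 :=
    congrArg (fun v : (𝓞 K)ˣ ↦ (v : K)) (show Units.map _ e.toMul = 1 from he)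
  obtain ⟨u, hu⟩ := exists_unit_mul_smul_eq_of_norm_eq_one hcop hin hσ hnorm
  have hu' : e + unitsAction Gal(L/K) (𝓞 L) σ (.ofMul u) = .ofMul u := Units.ext hu
  refine ⟨-.ofMul u, ?_⟩
  change unitsAction Gal(L/K) (𝓞 L) σ (-.ofMul u) - -.ofMul u = e
  rw [map_neg, neg_sub_neg, sub_eq_iff_eq_add, hu']

theorem prime_dvd_classNumber_of_inertia_eq_bot {p : ℕ} (hp : p.Prime)
    (hdeg : Module.finrank K L = p) (hζ : ∀ ζ : K, ¬ IsPrimitiveRoot ζ p)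
    (hin : ∀ Q : Ideal (𝓞 L), Q.IsMaximal → Q.inertia Gal(L/K) = ⊥) : p ∣ classNumber K := by
  have : Fact p.Prime := ⟨hp⟩
  have : FiniteDimensional K L := Module.Finite.of_restrictScalars_finite ℚ K L
  by_contra hndvd
  have hcop : (classNumber K).Coprime (Module.finrank K L) :=
    hdeg ▸ ((Nat.Prime.coprime_iff_not_dvd hp).2 hndvd).symm
  have hcard : Nat.card Gal(L/K) = p := (IsGalois.card_aut_eq_finrank K L).trans hdeg
  have : IsCyclic Gal(L/K) := isCyclic_of_prime_card hcard
  obtain ⟨σ, hσ⟩ := IsCyclic.exists_generator (α := Gal(L/K))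
  have hpow : unitsAction Gal(L/K) (𝓞 L) σ ^ p = 1 := by
    rw [← map_pow, ← hcard, pow_card_eq_one', map_one]
  have hindex : (unitsNorm K L).range.index ≠ 0 := by
    refine ne_zero_of_dvd_ne_zero ?_
      (AddSubgroup.index_dvd_of_le multiples_finrank_le_range_unitsNorm)
    rw [hdeg, index_multiples_units hp hζ]
    exact pow_ne_zero _ hp.ne_zero
  have hdvd : p ^ rank L ∣ (p ^ rank K) ^ p := by
    rw [← index_multiples_units hp hζ]
    exact (pow_rank_dvd_index_multiples_units L p).trans (index_multiples_dvd_of_ker_le hp hpow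
      (ker_unitsNorm_le_range_unitsAction_sub_one hcop hin hσ) hindex
      (pow_prime_injective_units hp hζ))
  rw [← pow_mul, Nat.pow_dvd_pow_iff_le_right hp.one_lt] at hdvd
  have hodd : Odd p := hp.odd_of_ne_two fun h ↦ hζ (-1) (h ▸ IsPrimitiveRoot.neg_one 0 (by decide))
  have hrank := rank_add_one_eq_of_odd_finrank K L (hdeg ▸ hodd)
  rw [hdeg, add_mul, one_mul] at hrank
  have := hp.one_lt
  omega

end HilbertNinetyFour

section Cubic

open Polynomial

theorem irreducible_map_of_coprime_finrank {F K : Type*} [Field F] [Field K] [Algebra F K]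
    [FiniteDimensional F K] {f : F[X]} (hf : Irreducible f)
    (hcop : f.natDegree.Coprime (Module.finrank F K)) :
    Irreducible (f.map (algebraMap F K)) := by
  have hmap : f.map (algebraMap F K) ≠ 0 := map_ne_zero hf.ne_zero
  have hunit : ¬ IsUnit (f.map (algebraMap F K)) := by
    simpa only [isUnit_iff_degree_eq_zero, degree_map] using hf.not_isUnit
  obtain ⟨g, hg, hgf⟩ := WfDvdMonoid.exists_irreducible_factor hunit hmap
  have : Fact (Irreducible g) := ⟨hg⟩
  have hfin : FiniteDimensional K (AdjoinRoot g) := (AdjoinRoot.powerBasis hg.ne_zero).finite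
  have : FiniteDimensional F (AdjoinRoot g) := FiniteDimensional.trans F K _
  have hroot : aeval (AdjoinRoot.root g) f = 0 := by
    rw [← aeval_map_algebraMap K, AdjoinRoot.aeval_eq, AdjoinRoot.mk_eq_zero]
    exact hgf
  have hfdvd : f.natDegree ∣ Module.finrank F (AdjoinRoot g) := by
    rw [natDegree_eq_of_degree_eq (degree_eq_degree_of_associated
      ((minpoly.irreducible (Algebra.IsIntegral.isIntegral _)).associated_of_dvd hf
        (minpoly.dvd F _ hroot))).symm]
    exact minpoly.degree_dvd (Algebra.IsIntegral.isIntegral _)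
  rw [← Module.finrank_mul_finrank F K, (AdjoinRoot.powerBasis hg.ne_zero).finrank,
    AdjoinRoot.powerBasis_dim] at hfdvd
  have hle := Nat.le_of_dvd hg.natDegree_pos (hcop.dvd_of_dvd_mul_left hfdvd)
  rw [← natDegree_map (algebraMap F K)] at hle
  exact (associated_of_dvd_of_natDegree_le hgf hmap hle).irreducible hg

theorem eval₂_toPoly {R S : Type*} [CommSemiring R] [CommSemiring S] (φ : R →+* S) (P : Cubic R)
    (x : S) : P.toPoly.eval₂ φ x = φ P.a * x ^ 3 + φ P.b * x ^ 2 + φ P.c * x + φ P.d := by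
  simp only [Cubic.toPoly, eval₂_add, eval₂_mul, eval₂_C, eval₂_X_pow, eval₂_X]

theorem eval₂_derivative_toPoly {R S : Type*} [CommSemiring R] [CommSemiring S] (φ : R →+* S)
    (P : Cubic R) (x : S) :
    (derivative P.toPoly).eval₂ φ x = 3 * φ P.a * x ^ 2 + 2 * φ P.b * x + φ P.c := by
  simp only [Cubic.toPoly, derivative_add, derivative_C_mul_X_pow, derivative_C_mul_X,
    derivative_C, eval₂_add, eval₂_mul, eval₂_C, eval₂_X_pow, eval₂_zero, map_mul,
    map_natCast, eval₂_natCast]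
  push_cast
  ring

theorem irreducible_toPoly_of_odd {P : Cubic ℤ} (ha : P.a = 1) (hd : Odd P.d)
    (hbc : Odd (P.b + P.c)) : Irreducible P.toPoly := by
  have hmonic := Cubic.monic_of_a_eq_one ha
  refine hmonic.irreducible_of_irreducible_map (Int.castRingHom (ZMod 2)) _ ?_
  have hdeg : (P.toPoly.map (Int.castRingHom (ZMod 2))).natDegree = 3 := by
    rw [hmonic.natDegree_map, Cubic.natDegree_of_a_ne_zero (ha ▸ one_ne_zero)]
  rw [(hmonic.map _).irreducible_iff_roots_eq_zero_of_degree_le_three (by lia) (by lia),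
    Multiset.eq_zero_iff_forall_notMem]
  intro r hr
  rw [mem_roots (hmonic.map _).ne_zero, IsRoot.def, eval_map, eval₂_toPoly, ha] at hr
  simp only [eq_intCast, Int.cast_one, one_mul, hd.intCast_zmod_two] at hr
  have hbc2 : (P.b + P.c : ZMod 2) = 1 := by exact_mod_cast hbc.intCast_zmod_two
  have hr2 : r ^ 2 = r := ZMod.pow_card r
  have h2 : (2 : ZMod 2) = 0 := rfl
  exact one_ne_zero (by linear_combination hr - r * hbc2 - (r + 1 + P.b) * hr2 - r * h2)

theorem irreducible_map_toPoly_of_odd {K : Type*} [Field K] [NumberField K]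
    (hdeg : Nat.Coprime 3 (Module.finrank ℚ K)) {P : Cubic ℤ} (ha : P.a = 1) (hd : Odd P.d)
    (hbc : Odd (P.b + P.c)) : Irreducible (P.toPoly.map (Int.castRingHom K)) := by
  have hmonic := Cubic.monic_of_a_eq_one ha
  have hrat := (hmonic.irreducible_iff_irreducible_map_fraction_map (K := ℚ)).1
    (irreducible_toPoly_of_odd ha hd hbc)
  rw [RingHom.ext_int (Int.castRingHom K) ((algebraMap ℚ K).comp (algebraMap ℤ ℚ)), ← map_map]
  refine irreducible_map_of_coprime_finrank hrat ?_
  rwa [hmonic.natDegree_map, Cubic.natDegree_of_a_ne_zero (ha ▸ one_ne_zero)]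

variable {K L : Type*} [Field K] [Field L] [Algebra K L]

/- Here `(b + θ) ^ 2 - 4 * (θ ^ 2 + b * θ + c)` is the discriminant of `P / (X - θ)`. -/
theorem algebraMap_discr_eq {P : Cubic K} (ha : P.a = 1) {θ : L} (hθ : aeval θ P.toPoly = 0) :
    algebraMap K L P.discr = aeval θ (derivative P.toPoly) ^ 2 *
      ((algebraMap K L P.b + θ) ^ 2 -
        4 * (θ ^ 2 + algebraMap K L P.b * θ + algebraMap K L P.c)) := by
  rw [aeval_def, eval₂_toPoly, ha, map_one, one_mul] at hθ
  rw [aeval_def, eval₂_derivative_toPoly, Cubic.discr, ha]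
  simp only [map_add, map_sub, map_mul, map_pow, map_ofNat, map_one,
    eq_neg_of_add_eq_zero_right hθ]
  ring

theorem splits_map_toPoly_of_isSquare_discr (h2 : (2 : L) ≠ 0) {P : Cubic K} (ha : P.a = 1)
    (hsep : P.toPoly.Separable) (hdiscr : IsSquare P.discr) {θ : L} (hθ : aeval θ P.toPoly = 0) :
    (P.toPoly.map (algebraMap K L)).Splits := by
  obtain ⟨s, hs⟩ := hdiscr
  have hder := hsep.aeval_derivative_ne_zero hθ
  have hδ := algebraMap_discr_eq ha hθ
  rw [hs, map_mul, ← sq, mul_comm, ← div_eq_iff (pow_ne_zero 2 hder), ← div_pow] at hδ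
  set δ := algebraMap K L s / aeval θ (derivative P.toPoly)
  set b := algebraMap K L P.b
  set c := algebraMap K L P.c
  rw [aeval_def, eval₂_toPoly, ha, map_one, one_mul] at hθ
  have hfac : P.toPoly.map (algebraMap K L) =
      (X - C θ) * (X - C ((-b - θ + δ) / 2)) * (X - C ((-b - θ - δ) / 2)) := by
    rw [Cubic.prod_X_sub_C_eq, ← Cubic.map_toPoly, Cubic.toPoly_injective]
    ext
    · rw [Cubic.map, ha, map_one]
    · simp only [Cubic.map]
      field_simp
      ring
    · simp only [Cubic.map]
      field_simp
      linear_combination hδ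
    · simp only [Cubic.map]
      field_simp
      linear_combination 4 * hθ - θ * hδ
  rw [hfac]
  exact ((Splits.X_sub_C _).mul (Splits.X_sub_C _)).mul (Splits.X_sub_C _)

theorem isGalois_of_isSquare_discr [CharZero K] {P : Cubic K} (ha : P.a = 1)
    (hP : Irreducible P.toPoly) (hdiscr : IsSquare P.discr) {θ : L} (hθ : aeval θ P.toPoly = 0)
    (hgen : Algebra.adjoin K {θ} = ⊤) : IsGalois K L := by
  have : CharZero L := charZero_of_injective_algebraMap (algebraMap K L).injective
  have : P.toPoly.IsSplittingField K L := by
    refine ⟨splits_map_toPoly_of_isSquare_discr two_ne_zero ha hP.separable hdiscr hθ, ?_⟩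
    rw [eq_top_iff, ← hgen]
    exact Algebra.adjoin_mono (Set.singleton_subset_iff.2 (mem_rootSet.2 ⟨hP.ne_zero, hθ⟩))
  exact IsGalois.of_separable_splitting_field hP.separable

theorem exists_isGalois_finrank_eq_three_of_isSquare_discr.{u} {K : Type u} [Field K]
    [CharZero K] {P : Cubic K} (ha : P.a = 1) (hP : Irreducible P.toPoly)
    (hdiscr : IsSquare P.discr) :
    ∃ (L : Type u) (_ : Field L) (_ : Algebra K L) (θ : L), IsGalois K L ∧
      Module.finrank K L = 3 ∧ aeval θ P.toPoly = 0 ∧ Algebra.adjoin K {θ} = ⊤ := by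
  have : Fact (Irreducible P.toPoly) := ⟨hP⟩
  have hroot : aeval (AdjoinRoot.root P.toPoly) P.toPoly = 0 := AdjoinRoot.eval₂_root P.toPoly
  refine ⟨AdjoinRoot P.toPoly, inferInstance, inferInstance, AdjoinRoot.root P.toPoly,
    isGalois_of_isSquare_discr ha hP hdiscr hroot AdjoinRoot.adjoinRoot_eq_top, ?_, hroot,
    AdjoinRoot.adjoinRoot_eq_top⟩
  rw [(AdjoinRoot.powerBasis hP.ne_zero).finrank, AdjoinRoot.powerBasis_dim,
    Cubic.natDegree_of_a_ne_zero (ha ▸ one_ne_zero)]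

end Cubic

section Inertia

theorem isIntegral_of_cubic {R S : Type*} [CommRing R] [CommRing S] [Algebra R S] {p q : R} {x : S}
    (hx : x ^ 3 + algebraMap R S p * x + algebraMap R S q = 0) : IsIntegral R x := by
  refine ⟨Cubic.toPoly ⟨1, 0, p, q⟩, Cubic.monic_of_a_eq_one', ?_⟩
  rw [← hx, eval₂_toPoly]
  simp only [map_one, map_zero, zero_mul, one_mul, add_zero]

variable {R : Type*} [CommRing R] [IsDomain R]

theorem sq_add_mul_add_sq_eq_neg_of_cubic {p q x y : R} (hx : x ^ 3 + p * x + q = 0)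
    (hy : y ^ 3 + p * y + q = 0) (hxy : x ≠ y) : x ^ 2 + x * y + y ^ 2 = -p := by
  refine mul_left_cancel₀ (sub_ne_zero.2 hxy) ?_
  linear_combination hx - hy

theorem add_add_eq_zero_of_cubic {p q x y z : R} (hx : x ^ 3 + p * x + q = 0)
    (hy : y ^ 3 + p * y + q = 0) (hz : z ^ 3 + p * z + q = 0) (hxy : x ≠ y) (hxz : x ≠ z)
    (hyz : y ≠ z) : x + y + z = 0 := by
  refine mul_left_cancel₀ (sub_ne_zero.2 hyz) ?_
  linear_combination sq_add_mul_add_sq_eq_neg_of_cubic hx hy hxy -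
    sq_add_mul_add_sq_eq_neg_of_cubic hx hz hxz

variable {G : Type*} [Group G] [MulSemiringAction G R]

/- Modulo `Q` the three conjugates of `x` coincide, while their sum is `0`. -/
theorem mem_and_three_mul_mem_of_mem_inertia {Q : Ideal R} {σ : G} (hσ : σ ∈ Q.inertia G)
    (hσ3 : σ ^ 3 = 1) {p q x : R} (hp : σ • p = p) (hq : σ • q = q)
    (hx : x ^ 3 + p * x + q = 0) (hσx : σ • x ≠ x) : p ∈ Q ∧ 3 * q ∈ Q := by
  have hroot {y : R} (hy : y ^ 3 + p * y + q = 0) :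
      (σ • y) ^ 3 + p * σ • y + q = 0 := by
    simpa only [smul_add, smul_mul', smul_pow', smul_zero, hp, hq] using congrArg (σ • ·) hy
  have hσσσx : σ • σ • σ • x = x := by
    rw [smul_smul, smul_smul, ← pow_three', hσ3, one_smul]
  have hσσx : σ • σ • x ≠ x := fun h ↦ hσx (by rw [← h, hσσσx, h])
  have hsum := add_add_eq_zero_of_cubic hx (hroot hx) (hroot (hroot hx)) hσx.symm hσσx.symm
    ((MulAction.injective σ).ne hσx.symm)
  have hprod := sq_add_mul_add_sq_eq_neg_of_cubic hx (hroot hx) hσx.symm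
  have hx0 := Ideal.Quotient.eq.2 (hσ x)
  have hx1 := Ideal.Quotient.eq.2 (hσ (σ • x))
  rw [← Ideal.Quotient.eq_zero_iff_mem, ← Ideal.Quotient.eq_zero_iff_mem]
  apply_fun Ideal.Quotient.mk Q at hsum hprod hx
  simp only [map_add, map_mul, map_pow, map_neg, map_zero, map_ofNat, hx1, hx0] at hsum hprod hx ⊢
  set y := Ideal.Quotient.mk Q x
  have h3y : 3 * y = 0 := by linear_combination hsum
  have hp0 : Ideal.Quotient.mk Q p = 0 := by linear_combination hprod - y * h3y
  exact ⟨hp0, by linear_combination 3 * hx - y ^ 2 * h3y - 3 * y * hp0⟩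

theorem smul_ne_self_of_mul_eq_three_mul {σ : G} {θ s η : R} (hs : s ≠ 0) (hη : θ * s = 3 * η)
    (hsσ : σ • s = s) (hθσ : σ • θ ≠ θ) : σ • η ≠ η := by
  intro h
  refine hθσ (mul_right_cancel₀ hs ?_)
  have h3 : σ • (3 : R) = 3 := map_ofNat (MulSemiringAction.toRingHom G R σ) 3
  calc σ • θ * s = σ • (θ * s) := by rw [smul_mul', hsσ]
    _ = θ * s := by rw [hη, smul_mul', h3, h]

variable [CharZero R] {A C m : ℤ} {θ s : R}

theorem cubic_eq_zero_of_mul_eq_three_mul {η : R} (hθ : θ ^ 3 + -(3 * A) * θ + 9 * C = 0)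
    (hs : s ^ 2 = 3 * m) (hη : θ * s = 3 * η) : η ^ 3 + -(A * m) * η + C * m * s = 0 := by
  have h27 : (27 : R) ≠ 0 := by norm_num
  refine mul_left_cancel₀ h27 ?_
  linear_combination 3 * m * s * hθ + θ ^ 3 * s * hs +
    (9 * A * m - 9 * η ^ 2 - 3 * η * θ * s - θ ^ 2 * s ^ 2) * hη

theorem three_dvd_mul_of_cubic [IsIntegrallyClosed R] (hθ : θ ^ 3 + -(3 * A) * θ + 9 * C = 0)
    (hs : s ^ 2 = 3 * m) : 3 ∣ θ * s := by
  let F := FractionRing R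
  have : CharZero F := charZero_of_injective_algebraMap (IsFractionRing.injective R F)
  have hη : algebraMap R F θ * algebraMap R F s =
      3 * (algebraMap R F θ * algebraMap R F s / 3) := (mul_div_cancel₀ _ three_ne_zero).symm
  have hη_int : IsIntegral R (algebraMap R F θ * algebraMap R F s / 3) := by
    apply_fun algebraMap R F at hθ hs
    simp only [map_add, map_mul, map_neg, map_pow, map_ofNat, map_intCast, map_zero] at hθ hs
    refine isIntegral_of_cubic (R := R) (p := -(A * m)) (q := C * m * s) ?_
    simpa only [map_mul, map_neg, map_intCast] using cubic_eq_zero_of_mul_eq_three_mul hθ hs hη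
  obtain ⟨η, hη'⟩ := IsIntegrallyClosed.isIntegral_iff.1 hη_int
  refine ⟨η, IsFractionRing.injective R F ?_⟩
  rw [map_mul, map_mul, map_ofNat, hη', ← hη]

theorem inertia_eq_bot_of_cubic [IsIntegrallyClosed R] (hG : ∀ σ : G, σ ^ 3 = 1)
    (hAC : IsCoprime A (9 * C)) (hAm : IsCoprime (A * m) 3)
    (hθ : θ ^ 3 + -(3 * A) * θ + 9 * C = 0) (hs : s ^ 2 = 3 * m)
    (hsG : ∀ σ : G, σ • s = s) (hθG : ∀ σ : G, σ • θ = θ → σ = 1)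
    {Q : Ideal R} (hQ : Q ≠ ⊤) : Q.inertia G = ⊥ := by
  refine eq_bot_iff.2 fun σ hσ ↦ Subgroup.mem_bot.2 (by_contra fun hσ1 ↦ hQ ?_)
  have hfix (n : ℤ) : σ • (n : R) = n := map_intCast (MulSemiringAction.toRingHom G R σ) n
  have hσθ : σ • θ ≠ θ := fun h ↦ hσ1 (hθG σ h)
  obtain ⟨η, hη⟩ := three_dvd_mul_of_cubic hθ hs
  have hs0 : s ≠ 0 := by
    rintro rfl
    have hm : m = 0 := by simpa using hs
    exact (by decide : ¬ IsUnit (3 : ℤ)) (isCoprime_zero_left.1 (by simpa [hm] using hAm))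
  obtain ⟨h3A, h27C⟩ := mem_and_three_mul_mem_of_mem_inertia hσ (hG σ)
    (p := -(3 * A)) (q := 9 * C) (by exact_mod_cast hfix (-(3 * A)))
    (by exact_mod_cast hfix (9 * C)) hθ hσθ
  obtain ⟨hAmQ, -⟩ := mem_and_three_mul_mem_of_mem_inertia hσ (hG σ)
    (by exact_mod_cast hfix (-(A * m))) (by rw [smul_mul', smul_mul', hfix, hfix, hsG])
    (cubic_eq_zero_of_mul_eq_three_mul hθ hs hη)
    (smul_ne_self_of_mul_eq_three_mul hs0 hη (hsG σ) hσθ)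
  rw [neg_mem_iff] at h3A hAmQ
  obtain ⟨u, v, huv⟩ := hAC.map (Int.castRingHom R)
  obtain ⟨w, z, hwz⟩ := hAm.map (Int.castRingHom R)
  simp only [map_mul, map_ofNat, eq_intCast] at huv hwz
  have h3 : (3 : R) ∈ Q := by
    convert Q.add_mem (Q.mul_mem_left u h3A) (Q.mul_mem_left v h27C) using 1
    linear_combination -3 * huv
  rw [Ideal.eq_top_iff_one, ← hwz]
  exact Q.add_mem (Q.mul_mem_left w hAmQ) (Q.mul_mem_left z h3)

theorem inertia_eq_bot_of_adjoin_cubic {K L : Type*} [Field K] [NumberField K] [Field L]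
    [NumberField L] [Algebra K L] [IsGalois K L] (hdeg : Module.finrank K L = 3) {A C m : ℤ}
    (hAC : IsCoprime A (9 * C)) (hAm : IsCoprime (A * m) 3) {s : K} (hs : s ^ 2 = 3 * m)
    {θ : L} (hθ : θ ^ 3 + -(3 * A) * θ + 9 * C = 0) (hgen : Algebra.adjoin K {θ} = ⊤)
    {Q : Ideal (𝓞 L)} (hQ : Q ≠ ⊤) : Q.inertia Gal(L/K) = ⊥ := by
  have : FiniteDimensional K L := Module.Finite.of_restrictScalars_finite ℚ K L
  have hG (σ : Gal(L/K)) : σ ^ 3 = 1 := by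
    rw [← hdeg, ← IsGalois.card_aut_eq_finrank K L, pow_card_eq_one']
  have hsint : IsIntegral ℤ s := by
    refine IsIntegral.of_pow two_pos (hs ▸ ?_)
    exact_mod_cast isIntegral_algebraMap (x := 3 * m)
  have hθint : IsIntegral ℤ θ :=
    isIntegral_of_cubic (p := -(3 * A)) (q := 9 * C) (by exact_mod_cast hθ)
  obtain ⟨s, rfl⟩ := (IsIntegralClosure.isIntegral_iff (A := 𝓞 K)).1 hsint
  obtain ⟨θ, rfl⟩ := (IsIntegralClosure.isIntegral_iff (A := 𝓞 L)).1 hθint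
  replace hθ : θ ^ 3 + -(3 * A) * θ + 9 * C = 0 := RingOfIntegers.coe_injective (by
    simpa only [map_add, map_mul, map_neg, map_pow, map_ofNat, map_intCast, map_zero] using hθ)
  replace hs : s ^ 2 = 3 * m := RingOfIntegers.coe_injective (by
    simpa only [map_mul, map_pow, map_ofNat, map_intCast] using hs)
  have hsL : algebraMap (𝓞 K) (𝓞 L) s ^ 2 = 3 * m := by
    rw [← map_pow, hs, map_mul, map_ofNat, map_intCast]
  have hθG (σ : Gal(L/K)) (h : σ • θ = θ) : σ = 1 := by
    have hσ : (σ : L →ₐ[K] L) = AlgHom.id K L :=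
      AlgHom.ext_of_adjoin_eq_top hgen fun x hx ↦ hx ▸ congrArg RingOfIntegers.val h
    exact AlgEquiv.ext fun x ↦ DFunLike.congr_fun hσ x
  exact inertia_eq_bot_of_cubic hG hAC hAm hθ hsL (smul_algebraMap · s) hθG hQ

end Inertia

section Quadratic

theorem isSquare_or_isSquare_or_isSquare_mul {F K : Type*} [Field F] [Field K] [Algebra F K]
    (hdeg : Module.finrank F K = 2) (h2 : (2 : F) ≠ 0) {a b : F} {x y : K}
    (hx : x ^ 2 = algebraMap F K a) (hy : y ^ 2 = algebraMap F K b) :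
    IsSquare a ∨ IsSquare b ∨ IsSquare (a * b) := by
  have : FiniteDimensional F K := .of_finrank_pos (hdeg ▸ two_pos)
  by_cases hxF : ∃ c, algebraMap F K c = x
  · obtain ⟨c, rfl⟩ := hxF
    exact .inl ⟨c, (algebraMap F K).injective (by rw [← hx, map_mul, sq])⟩
  have hind : LinearIndependent F ![1, x] := by
    refine LinearIndependent.pair_iff.2 fun u v huv ↦ ?_
    have hv : v = 0 := by
      by_contra hv
      refine hxF ⟨-u / v, ?_⟩
      rw [Algebra.smul_def, Algebra.smul_def, mul_one] at huv
      have hv' : algebraMap F K v ≠ 0 := (map_ne_zero _).2 hv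
      rw [map_div₀, map_neg, div_eq_iff hv']
      linear_combination -huv
    simpa [hv] using huv
  have hspan := hind.span_eq_top_of_card_eq_finrank' (by rw [hdeg, Fintype.card_fin])
  rw [Matrix.range_cons_cons_empty] at hspan
  obtain ⟨u, v, rfl⟩ := Submodule.mem_span_pair.1 (hspan ▸ Submodule.mem_top (x := y))
  obtain ⟨hc, huv⟩ := LinearIndependent.pair_iff.1 hind (u ^ 2 + v ^ 2 * a - b) (2 * u * v) (by
    simp only [Algebra.smul_def, map_add, map_sub, map_mul, map_pow, map_ofNat] at hy ⊢
    linear_combination hy - algebraMap F K v ^ 2 * hx)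
  rcases mul_eq_zero.1 huv with hu | rfl
  · obtain rfl := (mul_eq_zero_iff_left h2).1 hu
    exact .inr (.inr ⟨v * a, by linear_combination -a * hc⟩)
  · exact .inr (.inl ⟨u, by linear_combination -hc⟩)

theorem sq_two_mul_add_one_of_isPrimitiveRoot_three {R : Type*} [CommRing R] [IsDomain R] {ζ : R}
    (hζ : IsPrimitiveRoot ζ 3) : (2 * ζ + 1) ^ 2 = -3 := by
  have hsum := hζ.geom_sum_eq_zero (by norm_num)
  simp only [Finset.sum_range_succ, Finset.sum_range_zero, zero_add, pow_zero, pow_one] at hsum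
  linear_combination 4 * hsum

theorem not_isPrimitiveRoot_three {K : Type*} [Field K] [Algebra ℚ K]
    (hdeg : Module.finrank ℚ K = 2) {m : ℤ} (h3 : IsCoprime m 3) (h8 : m ≡ 3 [ZMOD 8]) {s : K}
    (hs : s ^ 2 = 3 * m) (ζ : K) : ¬ IsPrimitiveRoot ζ 3 := by
  intro hζ
  have hζ2 := sq_two_mul_add_one_of_isPrimitiveRoot_three hζ
  have hsq := isSquare_or_isSquare_or_isSquare_mul hdeg two_ne_zero (a := (-3 : ℤ))
    (b := ((3 * m : ℤ) : ℚ)) (x := 2 * ζ + 1) (y := s) (by simpa using hζ2)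
    (by rw [hs, map_intCast]; push_cast; rfl)
  rw [← Int.cast_mul, Rat.isSquare_intCast_iff, Rat.isSquare_intCast_iff,
    Rat.isSquare_intCast_iff] at hsq
  rcases hsq with h | ⟨k, hk⟩ | ⟨k, hk⟩
  · exact absurd h.nonneg (by decide)
  · have hk3 : 3 ∣ k := Int.prime_three.dvd_of_dvd_pow (n := 2) ⟨m, by rw [sq, hk]⟩
    obtain ⟨j, rfl⟩ := hk3
    have hm : (3 : ℤ) ∣ m := ⟨j * j, by linarith⟩
    exact Int.prime_three.not_isUnit (h3.isUnit_of_dvd' hm dvd_rfl)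
  · have hk8 : k * k ≡ 5 [ZMOD 8] := by
      rw [← hk]
      exact ((h8.mul_left 3).mul_left (-3)).trans (by decide)
    have hnsq : ∀ x : ZMod 8, x * x ≠ 5 := by decide
    exact hnsq k (by exact_mod_cast (ZMod.intCast_eq_intCast_iff _ _ 8).2 hk8)

end Quadratic

theorem isCoprime_mul_four_mul_pow_sub_sq {A B : ℤ} (hAB : IsCoprime A B) (hB : 3 ∣ B) :
    IsCoprime (A * (4 * A ^ 3 - B ^ 2)) 3 := by
  have hA : IsCoprime A 3 := hAB.of_isCoprime_of_dvd_right hB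
  obtain ⟨k, rfl⟩ := hB
  have h : 4 * A ^ 3 - (3 * k) ^ 2 = A ^ 3 + 3 * (A ^ 3 - 3 * k ^ 2) := by ring
  exact hA.mul_left (h ▸ (hA.pow_left (m := 3)).add_mul_left_left _)

theorem four_mul_pow_sub_sq_modEq {A B : ℤ} (hA : Odd A) (hB : Odd B) :
    4 * A ^ 3 - B ^ 2 ≡ 3 [ZMOD 8] := by
  have hB2 := Int.eight_dvd_sq_sub_one_of_odd hB
  obtain ⟨k, hk⟩ := hA.pow (n := 3)
  rw [hk, Int.modEq_iff_dvd]
  lia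

theorem class_number_div_three_of_sqrt_three_mul_four_pow_sub_pow_general
    (A B : ℤ) (hA : Odd A) (hB : Odd B) (hAB : IsCoprime A B) (h9 : 9 ∣ B)
    (K : Type*) [Field K] [NumberField K] (hdeg : Module.finrank ℚ K = 2)
    (hsqrt : ∃ α : K, α ^ 2 = 3 * (4 * (A : K) ^ 3 - (B : K) ^ 2)) :
    3 ∣ classNumber K := by
  obtain ⟨C, rfl⟩ := h9
  obtain ⟨α, hα⟩ := hsqrt
  have hs : α ^ 2 = 3 * ((4 * A ^ 3 - (9 * C) ^ 2 : ℤ) : K) := by exact_mod_cast hα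
  have hAm := isCoprime_mul_four_mul_pow_sub_sq hAB ⟨3 * C, by ring⟩
  let P : Cubic ℤ := ⟨1, 0, -(3 * A), 9 * C⟩
  have hP : Irreducible (P.map (Int.castRingHom K)).toPoly := by
    rw [Cubic.map_toPoly]
    refine irreducible_map_toPoly_of_odd (by rw [hdeg]; decide) rfl hB ?_
    simpa only [P, zero_add, odd_neg] using Odd.mul (by decide : Odd (3 : ℤ)) hA
  have hdiscr : IsSquare (P.map (Int.castRingHom K)).discr := by
    refine ⟨3 * α, ?_⟩
    simp only [Cubic.discr, Cubic.map, P, map_mul, map_neg, map_ofNat, map_one, map_zero,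
      eq_intCast]
    push_cast at hα
    linear_combination -9 * hα
  obtain ⟨L, _, _, θ, _, hdegL, hθ, hgen⟩ :=
    exists_isGalois_finrank_eq_three_of_isSquare_discr (map_one _) hP hdiscr
  have : Module.Finite K L := Module.finite_of_finrank_pos (hdegL ▸ three_pos)
  have : NumberField L := .of_module_finite K L
  replace hθ : θ ^ 3 + -(3 * A) * θ + 9 * C = 0 := by
    simpa only [Polynomial.aeval_def, eval₂_toPoly, Cubic.map, P, map_mul, map_neg, map_ofNat,
      map_one, map_zero, eq_intCast, map_intCast, one_mul, zero_mul, add_zero] using hθ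
  exact prime_dvd_classNumber_of_inertia_eq_bot Nat.prime_three hdegL
    (not_isPrimitiveRoot_three hdeg hAm.of_mul_left_right (four_mul_pow_sub_sq_modEq hA hB) hs)
    fun Q hQ ↦ inertia_eq_bot_of_adjoin_cubic hdegL hAB hAm hs hθ hgen hQ.ne_top

/-- Let `n > 1` be an integer and `a`, `b` odd integers with `gcd(a, b) = 1`, `a ≡ 1 (mod 3)`
and `b ≡ 0 (mod 3)`.  Then `3` divides the class number of
`ℚ(√(3 * (4 * a ^ (3 * n) - b ^ (2 * n))))`. -/
theorem class_number_div_three_of_sqrt_three_mul_four_pow_sub_pow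
    (n : ℕ) (hn : 1 < n)
    (a b : ℤ) (haodd : Odd a) (hbodd : Odd b) (hgcd : Int.gcd a b = 1)
    (ha : a ≡ 1 [ZMOD 3]) (hb : b ≡ 0 [ZMOD 3])
    (K : Type*) [Field K] [NumberField K] (hdeg : Module.finrank ℚ K = 2)
    (hsqrt : ∃ α : K, α ^ 2 = 3 * (4 * (a : K) ^ (3 * n) - (b : K) ^ (2 * n))) :
    3 ∣ NumberField.classNumber K := by
  obtain ⟨α, hα⟩ := hsqrt
  have h9 : 3 ^ 2 ∣ b ^ n :=
    (pow_dvd_pow_of_dvd (Int.modEq_zero_iff_dvd.1 hb) 2).trans (pow_dvd_pow b hn)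
  refine class_number_div_three_of_sqrt_three_mul_four_pow_sub_pow_general (a ^ n) (b ^ n)
    haodd.pow hbodd.pow (Int.isCoprime_iff_gcd_eq_one.2 hgcd).pow h9 K hdeg ⟨α, ?_⟩
  rw [hα]
  push_cast
  ring
end
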